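/- arXiv:2207.01477 — 8 statements merged into one kernel-verified Lean document; each statement's English description precedes it below -/
import Mathlib

section
/- Let T be the set of the eight strictly increasing 4-tuples (1,2,3,4), (1,2,5,6), (1,3,5,7), (1,4,6,7), (2,3,5,8), (2,4,6,8), (3,4,7,8), (5,6,7,8), and let M be a finite multiset of elements of T. Suppose that for every t in {1,...,8}, the total number of occurrences of t among all entries of all tuples of M (counted with multiplicity) equals the total number of occurrences of 9−t. Then in M the multiplicity of (1,2,3,4) equals that of (5,6,7,8), the multiplicity of (1,2,5,6) equals that of (3,4,7,8), the multiplicity of (1,3,5,7) equals that of (2,4,6,8), and the multiplicity of (1,4,6,7) equals that of (2,3,5,8). -/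
/-!
Read the row `l` as the vector in `{1, -1}⁴` whose `i`-th entry says which of `i` and `9 - i` occurs
in `l`. Torus-invariance says that the vectors of the rows in `M` sum to zero. The four rows
containing `1` give the rows of a Hadamard matrix of order 4, and complementing a row negates its
vector, so two rows that are neither equal nor complementary are orthogonal. Pairing the vanishing
sum with the vector of `r` leaves `4 * (M.count r - M.count r') = 0`, where `r'` is the complement
of `r`.
-/

theorem count_eq_count_of_sum_map_eq_zero {α A : Type*} [DecidableEq α] [AddCommGroup A]
    [IsAddTorsionFree A] {M : Multiset α} {f : α → A} {a b : α} (hsum : (M.map f).sum = 0)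
    (ha : f a ≠ 0) (hb : f b = -f a) (hf : ∀ s ∈ M, s ≠ a → s ≠ b → f s = 0) :
    M.count a = M.count b := by
  rcases eq_or_ne a b with rfl | hab
  · rfl
  have habsent (c : α) (hc : c ∉ M.toFinset) : M.count c • f c = 0 := by
    rw [Multiset.count_eq_zero_of_notMem (mt Multiset.mem_toFinset.mpr hc), zero_nsmul]
  have htwo : (M.map f).sum = M.count a • f a + M.count b • f b := by
    rw [Finset.sum_multiset_map_count]
    refine Finset.sum_eq_add a b hab (fun s hs hsab ↦ ?_) (habsent a) (habsent b)
    rw [hf s (Multiset.mem_toFinset.mp hs) hsab.1 hsab.2, nsmul_zero]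
  rw [hsum, hb, smul_neg, ← sub_eq_add_neg, eq_comm, sub_eq_zero] at htwo
  have hinj : Function.Injective fun k : ℕ ↦ k • f a :=
    injective_nsmul_iff_not_isOfFinAddOrder.mpr (not_isOfFinAddOrder_of_isAddTorsionFree ha)
  exact hinj htwo

theorem count_eq_count_of_orthogonal {α ι R : Type*} [DecidableEq α] [Fintype ι]
    [NonUnitalNonAssocRing R] [IsAddTorsionFree R] {M : Multiset α} {w : α → ι → R} {a b : α}
    (hsum : (M.map w).sum = 0) (ha : w a ⬝ᵥ w a ≠ 0) (hb : w b = -w a)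
    (horth : ∀ s ∈ M, s ≠ a → s ≠ b → w a ⬝ᵥ w s = 0) :
    M.count a = M.count b := by
  refine count_eq_count_of_sum_map_eq_zero (f := fun s ↦ w a ⬝ᵥ w s) ?_ ha (by simp [hb]) horth
  let pairing : (ι → R) →+ R := AddMonoidHom.mk' (w a ⬝ᵥ ·) (dotProduct_add (w a))
  calc (M.map fun s ↦ w a ⬝ᵥ w s).sum = pairing (M.map w).sum := by
        rw [map_multiset_sum, Multiset.map_map]; rfl
    _ = 0 := by rw [hsum, map_zero]

/-- The weight of a row for the maximal torus of `SO(2n)`, in the basis `ε₁, …, εₙ`, where an entry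
`t ≤ n` has weight `εₜ` and the entry `2n + 1 - t` has weight `-εₜ`. For a row of `spinRows` this is
twice the corresponding weight of the half-spin representation. Coordinates are indexed from `0`. -/
def weight (n : ℕ) (l : List ℕ) (i : Fin n) : ℤ :=
  l.count (i + 1 : ℕ) - l.count (2 * n + 1 - (i + 1))

/-- The image of a row under `t ↦ 2n + 1 - t`, reversed so that increasing rows stay increasing. For
a row containing exactly one of `t` and `2n + 1 - t` for each `t` in `{1, …, 2n}`, this is the
complementary row. -/
def complementaryRow (n : ℕ) (l : List ℕ) : List ℕ :=
  (l.map (2 * n + 1 - ·)).reverse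

/-- The eight rows indexing the weight vectors of a half-spin representation of `Spin(8)`. -/
def spinRows : List (List ℕ) :=
  [[1, 2, 3, 4], [1, 2, 5, 6], [1, 3, 5, 7], [1, 4, 6, 7],
    [2, 3, 5, 8], [2, 4, 6, 8], [3, 4, 7, 8], [5, 6, 7, 8]]

theorem count_complementaryRow {n t : ℕ} {l : List ℕ} (hl : ∀ x ∈ l, x ≤ 2 * n + 1)
    (ht : t ≤ 2 * n + 1) :
    (complementaryRow n l).count t = l.count (2 * n + 1 - t) := by
  rw [complementaryRow, List.count_reverse, List.count, List.countP_map]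
  refine List.countP_congr fun x hx ↦ ?_
  have hx_le := hl x hx
  simp only [Function.comp_apply, beq_iff_eq]
  omega

theorem weight_complementaryRow {n : ℕ} {l : List ℕ} (hl : ∀ x ∈ l, x ≤ 2 * n + 1) :
    weight n (complementaryRow n l) = -weight n l := by
  ext i
  have hi : 2 * n + 1 - (2 * n + 1 - (i + 1)) = (i + 1 : ℕ) := by omega
  simp only [weight, Pi.neg_apply, neg_sub]
  rw [count_complementaryRow hl (by omega), count_complementaryRow hl (by omega), hi]

theorem sum_map_weight_eq_zero {n : ℕ} {M : Multiset (List ℕ)}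
    (hocc : ∀ t ∈ Finset.Icc 1 n,
      (M.map fun l ↦ l.count t).sum = (M.map fun l ↦ l.count (2 * n + 1 - t)).sum) :
    (M.map (weight n)).sum = 0 := by
  ext i
  have h := congrArg (Nat.cast : ℕ → ℤ) (hocc (i + 1) (by simp))
  simp only [Nat.cast_multiset_sum, Multiset.map_map, Function.comp_def] at h
  simp only [Pi.multiset_sum_apply, Multiset.map_map, Function.comp_def, weight]
  rw [Multiset.sum_map_sub, h, sub_self, Pi.zero_apply]

theorem weight_dotProduct_self_of_mem_spinRows :
    ∀ r ∈ spinRows, weight 4 r ⬝ᵥ weight 4 r = 4 := by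
  decide

theorem weight_dotProduct_eq_zero_of_mem_spinRows :
    ∀ r ∈ spinRows, ∀ s ∈ spinRows, s ≠ r → s ≠ complementaryRow 4 r →
      weight 4 r ⬝ᵥ weight 4 s = 0 := by
  decide

theorem count_eq_count_complementaryRow {M : Multiset (List ℕ)} (hM : ∀ l ∈ M, l ∈ spinRows)
    (hsum : (M.map (weight 4)).sum = 0) {r : List ℕ} (hr : r ∈ spinRows) :
    M.count r = M.count (complementaryRow 4 r) := by
  have hbound : ∀ r ∈ spinRows, ∀ x ∈ r, x ≤ 2 * 4 + 1 := by decide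
  refine count_eq_count_of_orthogonal hsum ?_ (weight_complementaryRow (hbound r hr))
    fun s hs ↦ weight_dotProduct_eq_zero_of_mem_spinRows r hr s (hM s hs)
  rw [weight_dotProduct_self_of_mem_spinRows r hr]
  norm_num

/-- in a torus-invariant multiset of rows of standard Young tableaux on
`Spin(8)/P^{α₄}`, complementary rows occur with equal multiplicity. -/
theorem complementary_rows_equal_multiplicity (M : Multiset (List ℕ))
    (hM : ∀ l ∈ M, l ∈ ([[1,2,3,4], [1,2,5,6], [1,3,5,7], [1,4,6,7],
        [2,3,5,8], [2,4,6,8], [3,4,7,8], [5,6,7,8]] : List (List ℕ)))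
    (hocc : ∀ t ∈ Finset.Icc 1 8,
        (M.map (fun l => l.count t)).sum = (M.map (fun l => l.count (9 - t))).sum) :
    M.count [1,2,3,4] = M.count [5,6,7,8] ∧
    M.count [1,2,5,6] = M.count [3,4,7,8] ∧
    M.count [1,3,5,7] = M.count [2,4,6,8] ∧
    M.count [1,4,6,7] = M.count [2,3,5,8] := by
  have hsum : (M.map (weight 4)).sum = 0 :=
    sum_map_weight_eq_zero fun t ht ↦ hocc t (Finset.Icc_subset_Icc_right (by decide) ht)
  have hcount {r : List ℕ} (hr : r ∈ spinRows) : M.count r = M.count (complementaryRow 4 r) :=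
    count_eq_count_complementaryRow hM hsum hr
  exact ⟨hcount (r := [1, 2, 3, 4]) (by decide), hcount (r := [1, 2, 5, 6]) (by decide),
    hcount (r := [1, 3, 5, 7]) (by decide), hcount (r := [1, 4, 6, 7]) (by decide)⟩
end

section
/- Let n ≥ 2 and k ≥ 1 be integers, and let E : {1,...,2k} × {1,...,4n} → {1,...,8n} be an array such that: each row i ↦ E(i,j) is strictly increasing in j; each column j ↦ E(i,j) is weakly increasing in i; every value t in {1,...,8n} occurs exactly k times among the entries of E; E(2k,j) ≤ 2j for all 1 ≤ j ≤ 2n−3; and E(2k,2n−2) ≤ 4n−3. Then for every 1 ≤ j ≤ 2n−3 one has E(i,j) = 2j−1 for all 1 ≤ i ≤ k and E(i,j) = 2j for all k+1 ≤ i ≤ 2k; moreover E(i,2n−2) = 4n−5 for all 1 ≤ i ≤ k. -/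
/-!
The `2 * k * m` cells of the first `m` columns carry entries at most `2 * m`, and there are exactly
`2 * m * k` cells in the whole array with such an entry; hence the small entries fill these columns
and nothing else. Consequently the entries of column `m + 1` are at least `2 * m + 1`, and those
further right exceed `2 * m + 1` by strictness of the rows, so all `k` copies of `2 * m + 1` sit at
the top of column `m + 1`. The remaining `k` cells of this column are squeezed between `2 * m + 2`
and, where it is bounded by `2 * m + 2`, the bottom row.
-/

section

open Finset

theorem card_filter_le_of_card_fiber_eq {α : Type*} {s : Finset α} {f : α → ℕ} {k v : ℕ}
    (hpos : ∀ a ∈ s, 1 ≤ f a) (hcount : ∀ t ∈ Icc 1 v, #{a ∈ s | f a = t} = k) :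
    #{a ∈ s | f a ≤ v} = v * k := calc
  #{a ∈ s | f a ≤ v} = #{a ∈ s | f a ∈ Icc 1 v} :=
    congrArg card <| filter_congr fun a ha => by simp [hpos a ha]
  _ = ∑ t ∈ Icc 1 v, #{a ∈ s | f a = t} := (sum_card_fiberwise_eq_card_filter _ _ _).symm
  _ = v * k := by simp [sum_congr rfl hcount]

theorem apply_le_iff_le_card_filter_of_monotoneOn {α : Type*} [LinearOrder α] {f : ℕ → α}
    {r i : ℕ} (hf : MonotoneOn f (Set.Icc 1 r)) (hi : i ∈ Set.Icc 1 r) (a : α) :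
    f i ≤ a ↔ i ≤ #{l ∈ Icc 1 r | f l ≤ a} := by
  refine ⟨fun hia => ?_, fun hcard => ?_⟩
  · have hsub : Icc 1 i ⊆ {l ∈ Icc 1 r | f l ≤ a} := fun l hl => by
      obtain ⟨h1l, hli⟩ := mem_Icc.1 hl
      have hlr : l ≤ r := hli.trans hi.2
      exact mem_filter.2 ⟨mem_Icc.2 ⟨h1l, hlr⟩, (hf ⟨h1l, hlr⟩ hi hli).trans hia⟩
    simpa using card_le_card hsub
  · by_contra! hai
    have hsub : {l ∈ Icc 1 r | f l ≤ a} ⊆ Ico 1 i := fun l hl => by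
      obtain ⟨hl, hla⟩ := mem_filter.1 hl
      exact mem_Ico.2 ⟨(mem_Icc.1 hl).1,
        hf.reflect_lt (by simpa using hl) hi (hla.trans_lt hai)⟩
    have hlt := card_le_card hsub
    rw [Nat.card_Ico] at hlt
    have := hi.1
    omega

variable {r k N m v : ℕ} {E : ℕ → ℕ → ℕ}

theorem entry_le_iff_column_le (hmN : m ≤ N) (hcard : r * m = v * k)
    (hpos : ∀ i ∈ Icc 1 r, ∀ j ∈ Icc 1 N, 1 ≤ E i j)
    (hcount : ∀ t ∈ Icc 1 v, #{p ∈ Icc 1 r ×ˢ Icc 1 N | E p.1 p.2 = t} = k)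
    (hle : ∀ i ∈ Icc 1 r, ∀ j ∈ Icc 1 m, E i j ≤ v) :
    ∀ i ∈ Icc 1 r, ∀ j ∈ Icc 1 N, (E i j ≤ v ↔ j ≤ m) := by
  have hsub : Icc 1 r ×ˢ Icc 1 m ⊆ {p ∈ Icc 1 r ×ˢ Icc 1 N | E p.1 p.2 ≤ v} := fun p hp => by
    obtain ⟨hi, hj⟩ := mem_product.1 hp
    exact mem_filter.2
      ⟨mem_product.2 ⟨hi, Icc_subset_Icc_right hmN hj⟩, hle _ hi _ hj⟩
  have hsmall : #{p ∈ Icc 1 r ×ˢ Icc 1 N | E p.1 p.2 ≤ v} = v * k :=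
    card_filter_le_of_card_fiber_eq
      (fun p hp => hpos _ (mem_product.1 hp).1 _ (mem_product.1 hp).2) hcount
  have heq := eq_of_subset_of_card_le hsub (by simp [hsmall, hcard])
  intro i hi j hj
  have hmem := Finset.ext_iff.1 heq (i, j)
  simp only [mem_product, mem_filter, hi, hj, true_and] at hmem
  rw [← hmem, mem_Icc, and_iff_right (mem_Icc.1 hj).1]

theorem filter_entry_eq_succ_eq_product (hmN : m < N)
    (hrow : ∀ i ∈ Icc 1 r, StrictMonoOn (E i) (Set.Icc 1 N))
    (hsmall : ∀ i ∈ Icc 1 r, ∀ j ∈ Icc 1 N, (E i j ≤ v ↔ j ≤ m)) :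
    {p ∈ Icc 1 r ×ˢ Icc 1 N | E p.1 p.2 = v + 1} =
      {i ∈ Icc 1 r | E i (m + 1) ≤ v + 1} ×ˢ {m + 1} := by
  have hm : m + 1 ∈ Icc 1 N := mem_Icc.2 ⟨by omega, hmN⟩
  ext ⟨i, j⟩
  simp only [mem_filter, mem_product, mem_singleton]
  constructor
  · rintro ⟨⟨hi, hj⟩, hij⟩
    have hmj : m + 1 ≤ j := by
      have := hsmall i hi j hj
      omega
    have hle := (hrow i hi).monotoneOn (mem_Icc.1 hm) (mem_Icc.1 hj) hmj
    have hjm : j ≤ m + 1 := by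
      by_contra! hlt
      have := hrow i hi (mem_Icc.1 hm) (mem_Icc.1 hj) hlt
      have := hsmall i hi _ hm
      omega
    exact ⟨⟨hi, hle.trans hij.le⟩, by omega⟩
  · rintro ⟨⟨hi, hile⟩, rfl⟩
    have := hsmall i hi _ hm
    exact ⟨⟨hi, hm⟩, by omega⟩

theorem entry_eq_succ_iff_row_le (hmN : m < N)
    (hrow : ∀ i ∈ Icc 1 r, StrictMonoOn (E i) (Set.Icc 1 N))
    (hcol : MonotoneOn (E · (m + 1)) (Set.Icc 1 r))
    (hcount : #{p ∈ Icc 1 r ×ˢ Icc 1 N | E p.1 p.2 = v + 1} = k)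
    (hsmall : ∀ i ∈ Icc 1 r, ∀ j ∈ Icc 1 N, (E i j ≤ v ↔ j ≤ m)) {i : ℕ} (hi : i ∈ Icc 1 r) :
    E i (m + 1) = v + 1 ↔ i ≤ k := by
  have hlower : v + 1 ≤ E i (m + 1) := by
    have := hsmall i hi (m + 1) (mem_Icc.2 ⟨by omega, hmN⟩)
    omega
  rw [filter_entry_eq_succ_eq_product hmN hrow hsmall, card_product, card_singleton,
    mul_one] at hcount
  rw [← hcount, ← hlower.ge_iff_eq']
  exact apply_le_iff_le_card_filter_of_monotoneOn hcol (mem_Icc.1 hi) (v + 1)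

theorem first_columns_of_invariant_tableau_forced_general {M : ℕ} (hM : 1 ≤ M) (hMN : M ≤ N)
    (hpos : ∀ i j, 1 ≤ i → i ≤ 2 * k → 1 ≤ j → j ≤ N → 1 ≤ E i j)
    (hrow : ∀ i j j', 1 ≤ i → i ≤ 2 * k → 1 ≤ j → j < j' → j' ≤ N → E i j < E i j')
    (hcol : ∀ i i' j, 1 ≤ i → i ≤ i' → i' ≤ 2 * k → 1 ≤ j → j ≤ N → E i j ≤ E i' j)
    (hcount : ∀ t, 1 ≤ t → t < 2 * M → #{p ∈ Icc 1 (2 * k) ×ˢ Icc 1 N | E p.1 p.2 = t} = k)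
    (hbot : ∀ j, 1 ≤ j → j < M → E (2 * k) j ≤ 2 * j) :
    (∀ j, 1 ≤ j → j < M →
      (∀ i, 1 ≤ i → i ≤ k → E i j = 2 * j - 1) ∧
      (∀ i, k + 1 ≤ i → i ≤ 2 * k → E i j = 2 * j)) ∧
    (∀ i, 1 ≤ i → i ≤ k → E i M = 2 * M - 1) := by
  have hle (j : ℕ) (hj1 : 1 ≤ j) (hj : j < M) (i : ℕ) (hi : i ∈ Icc 1 (2 * k)) :
      E i j ≤ 2 * j :=
    (hcol i _ j (mem_Icc.1 hi).1 (mem_Icc.1 hi).2 le_rfl hj1 (by omega)).trans (hbot j hj1 hj)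
  have hsmall (m : ℕ) (hm : m < M) :
      ∀ i ∈ Icc 1 (2 * k), ∀ j ∈ Icc 1 N, (E i j ≤ 2 * m ↔ j ≤ m) := by
    refine entry_le_iff_column_le (by omega) (mul_right_comm 2 k m) ?_ ?_ ?_
    · exact fun i hi j hj =>
        hpos i j (mem_Icc.1 hi).1 (mem_Icc.1 hi).2 (mem_Icc.1 hj).1 (mem_Icc.1 hj).2
    · exact fun t ht => hcount t (mem_Icc.1 ht).1 (by have := (mem_Icc.1 ht).2; omega)
    · intro i hi j hj
      obtain ⟨hj1, hjm⟩ := mem_Icc.1 hj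
      exact (hle j hj1 (by omega) i hi).trans (by omega)
  have htop (j : ℕ) (hj1 : 1 ≤ j) (hj : j ≤ M) (i : ℕ) (hi : i ∈ Icc 1 (2 * k)) :
      E i j = 2 * j - 1 ↔ i ≤ k := by
    obtain ⟨m, rfl⟩ := Nat.exists_eq_add_of_le' hj1
    exact entry_eq_succ_iff_row_le (hj.trans hMN)
      (fun i hi j hj j' hj' hlt =>
        hrow i j j' (mem_Icc.1 hi).1 (mem_Icc.1 hi).2 hj.1 hlt hj'.2)
      (fun i hi i' hi' hii' => hcol i i' _ hi.1 hii' hi'.2 hj1 (hj.trans hMN))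
      (hcount _ (by omega) (by omega)) (hsmall m hj) hi
  refine ⟨fun j hj1 hj => ⟨fun i hi1 hik => ?_, fun i hki hi => ?_⟩, fun i hi1 hik => ?_⟩
  · exact (htop j hj1 hj.le i (mem_Icc.2 ⟨hi1, by omega⟩)).2 hik
  · have hi : i ∈ Icc 1 (2 * k) := mem_Icc.2 ⟨by omega, hi⟩
    have htop_iff := htop j hj1 hj.le i hi
    have hlower := hsmall (j - 1) (by omega) i hi j (mem_Icc.2 ⟨hj1, by omega⟩)
    have hupper := hle j hj1 hj i hi
    omega
  · exact (htop M hM le_rfl i (mem_Icc.2 ⟨hi1, by omega⟩)).2 hik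

end

/-- the first `2n-3` columns of a torus-invariant standard tableau on the
Schubert variety `X(w₆)` in `Spin(8n)/P^{α₄ₙ}` are forced, as is the top half of
column `2n-2`. -/
theorem first_columns_of_invariant_tableau_forced (n k : ℕ) (hn : 2 ≤ n) (hk : 1 ≤ k)
    (E : ℕ → ℕ → ℕ)
    (hrange : ∀ i j, 1 ≤ i → i ≤ 2*k → 1 ≤ j → j ≤ 4*n → 1 ≤ E i j ∧ E i j ≤ 8*n)
    (hrow : ∀ i j j', 1 ≤ i → i ≤ 2*k → 1 ≤ j → j < j' → j' ≤ 4*n → E i j < E i j')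
    (hcol : ∀ i i' j, 1 ≤ i → i ≤ i' → i' ≤ 2*k → 1 ≤ j → j ≤ 4*n → E i j ≤ E i' j)
    (hcount : ∀ t, 1 ≤ t → t ≤ 8*n →
      (((Finset.Icc 1 (2*k)) ×ˢ (Finset.Icc 1 (4*n))).filter
        (fun p => E p.1 p.2 = t)).card = k)
    (hbot : ∀ j, 1 ≤ j → j ≤ 2*n - 3 → E (2*k) j ≤ 2*j)
    (hbot' : E (2*k) (2*n - 2) ≤ 4*n - 3) :
    (∀ j, 1 ≤ j → j ≤ 2*n - 3 →
      (∀ i, 1 ≤ i → i ≤ k → E i j = 2*j - 1) ∧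
      (∀ i, k + 1 ≤ i → i ≤ 2*k → E i j = 2*j)) ∧
    (∀ i, 1 ≤ i → i ≤ k → E i (2*n - 2) = 4*n - 5) := by
  obtain ⟨hcols, htop⟩ := first_columns_of_invariant_tableau_forced_general (M := 2*n - 2)
    (by omega) (by omega) (fun i j hi hi' hj hj' => (hrange i j hi hi' hj hj').1) hrow hcol
    (fun t ht ht' => hcount t ht (by omega)) (fun j hj hj' => hbot j hj (by omega))
  exact ⟨fun j hj hj' => hcols j hj (by omega), fun i hi hi' => (htop i hi hi').trans (by omega)⟩
end

section
/- Let n ≥ 2 and k ≥ 1 be integers, and let E : {1,...,2k} × {1,...,4n} → {1,...,8n} be an array such that: each row is strictly increasing from left to right; each column is weakly increasing from top to bottom; every value t in {1,...,8n} occurs exactly k times among the entries of E; for every row i and every t in {1,...,4n}, exactly one of t and 8n+1−t occurs among the entries of row i; every row contains an even number of entries greater than 4n; and the bottom row (row 2k) is entrywise at most the tuple w6 = (2,4,...,4n−6, 4n−3, 4n+1, 4n+2, 4n+3, 4n+5, 4n+6, 4n+8, ..., 8n), i.e. whose j-th entry is 2j for 1 ≤ j ≤ 2n−3, then 4n−3,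 4n+1, 4n+2, 4n+3, 4n+5, and then 4n+4+2(j−2n−2) for 2n+3 ≤ j ≤ 4n. Then the bottom row of E, which begins with 2,4,...,4n−6 in its first 2n−3 positions, continues with one of the following six tuples in positions 2n−2 through 4n: (4n−4,4n−2,4n,4n+2,4n+4,4n+6,4n+8,...,8n), (4n−3,4n−2,4n,4n+2,4n+5,4n+6,4n+8,...,8n), (4n−4,4n−1,4n,4n+3,4n+4,4n+6,4n+8,...,8n), (4n−3,4n−1,4n,4n+3,4n+5,4n+6,4n+8,...,8n), (4n−4,4n+1,4n+2,4n+3,4n+4,4n+6,4n+8,...,8n), or (4n−3,4n+1,4n+2,4n+3,4n+5,4n+6,4n+8,...,8n). -/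
/-!
At most `k * t` cells carry an entry in `{1, …, t}`. Since columns increase downwards, an entry `t`
in position `j` of the bottom row forces such entries in the `2k * j` cells of the first `j`
columns, so `2j ≤ t`. Together with the upper bound `w₆` this determines the bottom row outside the
positions `2n - 2, …, 2n + 2`. There, the pairing condition ties position `2n - 2` to `2n + 2` and
`2n - 1` to `2n + 1`, while parity prevents the entries from crossing `4n` between the positions
`2n - 1` and `2n`; this leaves two possibilities for the outer pair and three for the middle triple.
-/

section Counting

open Finset

theorem card_mul_le_mul_of_card_fiber_le {ι : Type*} {R : Finset ι} {E : ι → ℕ → ℕ} {f : ℕ → ℕ}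
    {c k j : ℕ} (hpos : ∀ i ∈ R, ∀ l ∈ Set.Icc 1 c, 1 ≤ E i l)
    (hle : ∀ i ∈ R, ∀ l ∈ Set.Icc 1 c, E i l ≤ f l) (hf : MonotoneOn f (Set.Icc 1 c))
    (hcount : ∀ t ∈ Set.Icc 1 (f c), #{p ∈ R ×ˢ Icc 1 c | E p.1 p.2 = t} ≤ k)
    (hj : j ∈ Set.Icc 1 c) : #R * j ≤ k * f j := by
  have hmaps : ∀ p ∈ R ×ˢ Icc 1 j, E p.1 p.2 ∈ Icc 1 (f j) := by
    rintro ⟨i, l⟩ hp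
    obtain ⟨hi, hl, hlj⟩ : i ∈ R ∧ 1 ≤ l ∧ l ≤ j := by
      simpa only [mem_product, mem_Icc] using hp
    have hlc : l ∈ Set.Icc 1 c := ⟨hl, hlj.trans hj.2⟩
    exact mem_Icc.2 ⟨hpos i hi l hlc, (hle i hi l hlc).trans (hf hlc hj hlj)⟩
  have hfiber : ∀ t ∈ Icc 1 (f j), #{p ∈ R ×ˢ Icc 1 j | E p.1 p.2 = t} ≤ k := fun t ht ↦
    have htc : t ≤ f c := (mem_Icc.1 ht).2.trans (hf hj ⟨hj.1.trans hj.2, le_rfl⟩ hj.2)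
    (card_le_card <| filter_subset_filter _ <|
      product_subset_product_right <| Icc_subset_Icc_right hj.2).trans
        (hcount t ⟨(mem_Icc.1 ht).1, htc⟩)
  simpa using card_le_mul_card_image_of_maps_to hmaps k hfiber

theorem card_filter_lt_of_monotoneOn {α : Type*} [Preorder α] [DecidableLT α] {f : ℕ → α}
    {b : α} {c m : ℕ} (hf : MonotoneOn f (Set.Icc 1 c)) (hm : m < c) (hle : f m ≤ b)
    (hlt : b < f (m + 1)) : #{j ∈ Icc 1 c | b < f j} = c - m := by
  have hset : {j ∈ Icc 1 c | b < f j} = Ioc m c := by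
    ext j
    simp only [mem_filter, mem_Icc, mem_Ioc]
    constructor
    · rintro ⟨⟨hj, hjc⟩, hbj⟩
      refine ⟨lt_of_not_ge fun hjm ↦ ?_, hjc⟩
      exact hbj.not_ge ((hf ⟨hj, hjc⟩ ⟨hj.trans hjm, hm.le⟩ hjm).trans hle)
    · rintro ⟨hmj, hjc⟩
      have hj : 1 ≤ j := by omega
      exact ⟨⟨hj, hjc⟩, hlt.trans_le (hf ⟨by omega, hm⟩ ⟨hj, hjc⟩ hmj)⟩
  rw [hset, Nat.card_Ioc]

end Counting

/-- The tuples `f 1 < ⋯ < f N` in `{1, …, 2N}` that index the rows of tableaux for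
`Spin(2N)/P^{α_N}`: they contain exactly one element of each pair `{t, 2N + 1 - t}` and an even
number of entries greater than `N`. The values of `f` outside `{1, …, N}` are irrelevant. -/
structure IsSpinRow (N : ℕ) (f : ℕ → ℕ) : Prop where
  mapsTo : Set.MapsTo f (Set.Icc 1 N) (Set.Icc 1 (2 * N))
  strictMonoOn : StrictMonoOn f (Set.Icc 1 N)
  xor_mem_image : ∀ t ∈ Set.Icc 1 N,
    Xor (t ∈ f '' Set.Icc 1 N) (2 * N + 1 - t ∈ f '' Set.Icc 1 N)
  even_card : Even (Finset.card {j ∈ Finset.Icc 1 N | N < f j})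

namespace IsSpinRow

variable {N i j m : ℕ} {f : ℕ → ℕ}

theorem add_ne (h : IsSpinRow N f) (hi : i ∈ Set.Icc 1 N) (hj : j ∈ Set.Icc 1 N) :
    f i + f j ≠ 2 * N + 1 := by
  wlog hiN : f i ≤ N generalizing i j
  · intro hsum
    exact this hj hi (by omega) (by omega)
  intro hsum
  have hcompl : 2 * N + 1 - f i ∈ f '' Set.Icc 1 N := ⟨j, hj, by omega⟩
  have hxor := h.xor_mem_image (f i) ⟨(h.mapsTo hi).1, hiN⟩
  exact (xor_iff_not_iff _ _).1 hxor (iff_of_true ⟨i, hi, rfl⟩ hcompl)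

theorem even_sub_of_le_of_lt (h : IsSpinRow N f) (hm : m < N) (hle : f m ≤ N)
    (hlt : N < f (m + 1)) : Even (N - m) :=
  card_filter_lt_of_monotoneOn h.strictMonoOn.monotoneOn hm hle hlt ▸ h.even_card

end IsSpinRow

/-- The tuple `(2, 4, …, 8n)` with its entries in the positions `2n - 2, …, 2n + 2` replaced by
`a, b, c, d, e`; all bottom rows of interest, and the bound `w₆`, are of this form. -/
def evenTupleWith (n a b c d e j : ℕ) : ℕ :=
  if j = 2 * n - 2 then a else if j = 2 * n - 1 then b else if j = 2 * n then c
    else if j = 2 * n + 1 then d else if j = 2 * n + 2 then e else 2 * j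

/-- The one-line notation of the Weyl group element `w₆`, with positions counted from `1`. -/
def w₆ (n j : ℕ) : ℕ :=
  evenTupleWith n (4 * n - 3) (4 * n + 1) (4 * n + 2) (4 * n + 3) (4 * n + 5) j

section BetweenEvenTupleAndW₆

variable {n j : ℕ} {f : ℕ → ℕ}

theorem w₆_le_eight_mul (hn : 2 ≤ n) (hj : j ≤ 4 * n) : w₆ n j ≤ 8 * n := by
  unfold w₆ evenTupleWith
  split_ifs <;> omega

theorem eq_evenTupleWith_of_le_w₆ (hlow : 2 * j ≤ f j) (hup : f j ≤ w₆ n j) :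
    f j = evenTupleWith n (f (2 * n - 2)) (f (2 * n - 1)) (f (2 * n)) (f (2 * n + 1))
      (f (2 * n + 2)) j := by
  grind [w₆, evenTupleWith]

theorem IsSpinRow.outer_pair_of_le_w₆ (h : IsSpinRow (4 * n) f) (hn : 2 ≤ n)
    (hlow : ∀ j ∈ Set.Icc 1 (4 * n), 2 * j ≤ f j)
    (hup : ∀ j ∈ Set.Icc 1 (4 * n), f j ≤ w₆ n j) :
    (f (2 * n - 2) = 4 * n - 4 ∧ f (2 * n + 2) = 4 * n + 4) ∨
      (f (2 * n - 2) = 4 * n - 3 ∧ f (2 * n + 2) = 4 * n + 5) := by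
  have hleft : 2 * n - 2 ∈ Set.Icc 1 (4 * n) := ⟨by omega, by omega⟩
  have hright : 2 * n + 2 ∈ Set.Icc 1 (4 * n) := ⟨by omega, by omega⟩
  have hw_left : w₆ n (2 * n - 2) = 4 * n - 3 := by simp [w₆, evenTupleWith]
  have hw_right : w₆ n (2 * n + 2) = 4 * n + 5 := by grind [w₆, evenTupleWith]
  have hsum := h.add_ne hleft hright
  have hlow_left := hlow _ hleft
  have hlow_right := hlow _ hright
  have hup_left := hup _ hleft
  have hup_right := hup _ hright
  omega

theorem IsSpinRow.middle_triple_of_le_w₆ (h : IsSpinRow (4 * n) f) (hn : 1 ≤ n)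
    (hlow : ∀ j ∈ Set.Icc 1 (4 * n), 2 * j ≤ f j)
    (hup : ∀ j ∈ Set.Icc 1 (4 * n), f j ≤ w₆ n j) :
    (f (2 * n - 1) = 4 * n - 2 ∧ f (2 * n) = 4 * n ∧ f (2 * n + 1) = 4 * n + 2) ∨
      (f (2 * n - 1) = 4 * n - 1 ∧ f (2 * n) = 4 * n ∧ f (2 * n + 1) = 4 * n + 3) ∨
      (f (2 * n - 1) = 4 * n + 1 ∧ f (2 * n) = 4 * n + 2 ∧ f (2 * n + 1) = 4 * n + 3) := by
  have hleft : 2 * n - 1 ∈ Set.Icc 1 (4 * n) := ⟨by omega, by omega⟩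
  have hmid : 2 * n ∈ Set.Icc 1 (4 * n) := ⟨by omega, by omega⟩
  have hright : 2 * n + 1 ∈ Set.Icc 1 (4 * n) := ⟨by omega, by omega⟩
  have hcross : ¬ (f (2 * n - 1) ≤ 4 * n ∧ 4 * n < f (2 * n)) := by
    rintro ⟨hle, hlt⟩
    obtain ⟨r, hr⟩ : Even (4 * n - (2 * n - 1)) :=
      h.even_sub_of_le_of_lt (by omega) hle (by rwa [Nat.sub_add_cancel (by omega)])
    omega
  have hw_right : w₆ n (2 * n + 1) = 4 * n + 3 := by grind [w₆, evenTupleWith]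
  have hlt_left := h.strictMonoOn hleft hmid (by omega)
  have hlt_right := h.strictMonoOn hmid hright (by omega)
  have hsum := h.add_ne hleft hright
  have hlow_left := hlow _ hleft
  have hlow_mid := hlow _ hmid
  have hlow_right := hlow _ hright
  have hup_right := hup _ hright
  omega

end BetweenEvenTupleAndW₆

theorem bottom_row_of_invariant_tableau_six_cases_general (n k : ℕ) (hn : 2 ≤ n) (hk : 1 ≤ k)
    (E : ℕ → ℕ → ℕ)
    (hpos : ∀ i j, 1 ≤ i → i ≤ 2 * k → 1 ≤ j → j ≤ 4 * n → 1 ≤ E i j)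
    (hcol : ∀ i j, 1 ≤ i → i ≤ 2 * k → 1 ≤ j → j ≤ 4 * n → E i j ≤ E (2 * k) j)
    (hcount : ∀ t, 1 ≤ t → t ≤ 8 * n →
      (((Finset.Icc 1 (2 * k)) ×ˢ (Finset.Icc 1 (4 * n))).filter
        (fun p => E p.1 p.2 = t)).card ≤ k)
    (hrow : ∀ j j', 1 ≤ j → j < j' → j' ≤ 4 * n → E (2 * k) j < E (2 * k) j')
    (hpair : ∀ t, 1 ≤ t → t ≤ 4 * n →
      Xor (∃ j, 1 ≤ j ∧ j ≤ 4 * n ∧ E (2 * k) j = t)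
          (∃ j, 1 ≤ j ∧ j ≤ 4 * n ∧ E (2 * k) j = 8 * n + 1 - t))
    (heven : Even (((Finset.Icc 1 (4 * n)).filter (fun j => 4 * n < E (2 * k) j)).card))
    (hbot : ∀ j, 1 ≤ j → j ≤ 4 * n → E (2 * k) j ≤
      (if j = 2 * n - 2 then 4 * n - 3 else if j = 2 * n - 1 then 4 * n + 1
        else if j = 2 * n then 4 * n + 2 else if j = 2 * n + 1 then 4 * n + 3
        else if j = 2 * n + 2 then 4 * n + 5 else 2 * j)) :
    (∀ j, 1 ≤ j → j ≤ 2 * n - 3 → E (2 * k) j = 2 * j) ∧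
    ((∀ j, 2 * n - 2 ≤ j → j ≤ 4 * n → E (2 * k) j = 2 * j) ∨
     (∀ j, 2 * n - 2 ≤ j → j ≤ 4 * n → E (2 * k) j =
        (if j = 2 * n - 2 then 4 * n - 3 else if j = 2 * n + 2 then 4 * n + 5 else 2 * j)) ∨
     (∀ j, 2 * n - 2 ≤ j → j ≤ 4 * n → E (2 * k) j =
        (if j = 2 * n - 1 then 4 * n - 1 else if j = 2 * n + 1 then 4 * n + 3 else 2 * j)) ∨
     (∀ j, 2 * n - 2 ≤ j → j ≤ 4 * n → E (2 * k) j =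
        (if j = 2 * n - 2 then 4 * n - 3 else if j = 2 * n - 1 then 4 * n - 1
          else if j = 2 * n + 1 then 4 * n + 3 else if j = 2 * n + 2 then 4 * n + 5 else 2 * j)) ∨
     (∀ j, 2 * n - 2 ≤ j → j ≤ 4 * n → E (2 * k) j =
        (if j = 2 * n - 1 then 4 * n + 1 else if j = 2 * n then 4 * n + 2
          else if j = 2 * n + 1 then 4 * n + 3 else 2 * j)) ∨
     (∀ j, 2 * n - 2 ≤ j → j ≤ 4 * n → E (2 * k) j =
        (if j = 2 * n - 2 then 4 * n - 3 else if j = 2 * n - 1 then 4 * n + 1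
          else if j = 2 * n then 4 * n + 2 else if j = 2 * n + 1 then 4 * n + 3
          else if j = 2 * n + 2 then 4 * n + 5 else 2 * j))) := by
  have hle : ∀ j ∈ Set.Icc 1 (4 * n), E (2 * k) j ≤ 8 * n := fun j hj ↦
    (hbot j hj.1 hj.2).trans (w₆_le_eight_mul hn hj.2)
  have hspin : IsSpinRow (4 * n) (E (2 * k)) :=
    { mapsTo := fun j hj ↦
        ⟨hpos _ j (by omega) le_rfl hj.1 hj.2, (hle j hj).trans_eq (by ring)⟩
      strictMonoOn := fun j hj j' hj' hjj' ↦ hrow j j' hj.1 hjj' hj'.2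
      xor_mem_image := fun t ht ↦ by
        simpa only [Set.mem_image, Set.mem_Icc, and_assoc, ← mul_assoc, Nat.reduceMul]
          using hpair t ht.1 ht.2
      even_card := heven }
  have hlow : ∀ j ∈ Set.Icc 1 (4 * n), 2 * j ≤ E (2 * k) j := fun j hj ↦ by
    have hcells : (Finset.Icc 1 (2 * k)).card * j ≤ k * E (2 * k) j :=
      card_mul_le_mul_of_card_fiber_le
        (fun i hi l hl ↦ hpos i l (Finset.mem_Icc.1 hi).1 (Finset.mem_Icc.1 hi).2 hl.1 hl.2)
        (fun i hi l hl ↦ hcol i l (Finset.mem_Icc.1 hi).1 (Finset.mem_Icc.1 hi).2 hl.1 hl.2)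
        hspin.strictMonoOn.monotoneOn
        (fun t ht ↦ hcount t ht.1 (ht.2.trans (hle _ ⟨by omega, le_rfl⟩))) hj
    rw [Nat.card_Icc, Nat.add_sub_cancel, mul_right_comm, mul_comm] at hcells
    exact Nat.le_of_mul_le_mul_left hcells hk
  have hup : ∀ j ∈ Set.Icc 1 (4 * n), E (2 * k) j ≤ w₆ n j := fun j hj ↦ hbot j hj.1 hj.2
  have hwindow : ∀ j ∈ Set.Icc 1 (4 * n), E (2 * k) j =
      evenTupleWith n (E (2 * k) (2 * n - 2)) (E (2 * k) (2 * n - 1)) (E (2 * k) (2 * n))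
        (E (2 * k) (2 * n + 1)) (E (2 * k) (2 * n + 2)) j := fun j hj ↦
    eq_evenTupleWith_of_le_w₆ (hlow j hj) (hup j hj)
  refine ⟨fun j hj hjn ↦ ?_, ?_⟩
  · rw [hwindow j ⟨hj, by omega⟩]
    unfold evenTupleWith
    split_ifs <;> omega
  rcases hspin.outer_pair_of_le_w₆ hn hlow hup with houter | houter <;>
    rcases hspin.middle_triple_of_le_w₆ (by omega) hlow hup with hmiddle | hmiddle | hmiddle
  on_goal 1 => left
  on_goal 2 => right; right; left
  on_goal 3 => right; right; right; right; left
  on_goal 4 => right; left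
  on_goal 5 => right; right; right; left
  on_goal 6 => right; right; right; right; right
  all_goals
    intro j hj hjn
    rw [hwindow j ⟨by omega, hjn⟩]
    unfold evenTupleWith
    split_ifs <;> omega

/-- the six possibilities for the bottom row of a torus-invariant standard
tableau on the Schubert variety `X(w₆)` in `Spin(8n)/P^{α₄ₙ}`. -/
theorem bottom_row_of_invariant_tableau_six_cases (n k : ℕ) (hn : 2 ≤ n) (hk : 1 ≤ k)
    (E : ℕ → ℕ → ℕ)
    (hrange : ∀ i j, 1 ≤ i → i ≤ 2*k → 1 ≤ j → j ≤ 4*n → 1 ≤ E i j ∧ E i j ≤ 8*n)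
    (hrow : ∀ i j j', 1 ≤ i → i ≤ 2*k → 1 ≤ j → j < j' → j' ≤ 4*n → E i j < E i j')
    (hcol : ∀ i i' j, 1 ≤ i → i ≤ i' → i' ≤ 2*k → 1 ≤ j → j ≤ 4*n → E i j ≤ E i' j)
    (hcount : ∀ t, 1 ≤ t → t ≤ 8*n →
      (((Finset.Icc 1 (2*k)) ×ˢ (Finset.Icc 1 (4*n))).filter
        (fun p => E p.1 p.2 = t)).card = k)
    (hpair : ∀ i, 1 ≤ i → i ≤ 2*k → ∀ t, 1 ≤ t → t ≤ 4*n →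
      Xor' (∃ j, 1 ≤ j ∧ j ≤ 4*n ∧ E i j = t)
           (∃ j, 1 ≤ j ∧ j ≤ 4*n ∧ E i j = 8*n + 1 - t))
    (heven : ∀ i, 1 ≤ i → i ≤ 2*k →
      Even (((Finset.Icc 1 (4*n)).filter (fun j => 4*n < E i j)).card))
    (hbot : ∀ j, 1 ≤ j → j ≤ 4*n → E (2*k) j ≤
      (if j = 2*n - 2 then 4*n - 3 else if j = 2*n - 1 then 4*n + 1
        else if j = 2*n then 4*n + 2 else if j = 2*n + 1 then 4*n + 3
        else if j = 2*n + 2 then 4*n + 5 else 2*j)) :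
    (∀ j, 1 ≤ j → j ≤ 2*n - 3 → E (2*k) j = 2*j) ∧
    ((∀ j, 2*n - 2 ≤ j → j ≤ 4*n → E (2*k) j = 2*j) ∨
     (∀ j, 2*n - 2 ≤ j → j ≤ 4*n → E (2*k) j =
        (if j = 2*n - 2 then 4*n - 3 else if j = 2*n + 2 then 4*n + 5 else 2*j)) ∨
     (∀ j, 2*n - 2 ≤ j → j ≤ 4*n → E (2*k) j =
        (if j = 2*n - 1 then 4*n - 1 else if j = 2*n + 1 then 4*n + 3 else 2*j)) ∨
     (∀ j, 2*n - 2 ≤ j → j ≤ 4*n → E (2*k) j =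
        (if j = 2*n - 2 then 4*n - 3 else if j = 2*n - 1 then 4*n - 1
          else if j = 2*n + 1 then 4*n + 3 else if j = 2*n + 2 then 4*n + 5 else 2*j)) ∨
     (∀ j, 2*n - 2 ≤ j → j ≤ 4*n → E (2*k) j =
        (if j = 2*n - 1 then 4*n + 1 else if j = 2*n then 4*n + 2
          else if j = 2*n + 1 then 4*n + 3 else 2*j)) ∨
     (∀ j, 2*n - 2 ≤ j → j ≤ 4*n → E (2*k) j =
        (if j = 2*n - 2 then 4*n - 3 else if j = 2*n - 1 then 4*n + 1
          else if j = 2*n then 4*n + 2 else if j = 2*n + 1 then 4*n + 3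
          else if j = 2*n + 2 then 4*n + 5 else 2*j))) :=
  bottom_row_of_invariant_tableau_six_cases_general n k hn hk E
    (fun i j hi hik hj hjn ↦ (hrange i j hi hik hj hjn).1)
    (fun i j hi hik ↦ hcol i (2*k) j hi hik le_rfl) (fun t ht htn ↦ (hcount t ht htn).le)
    (fun j j' ↦ hrow (2*k) j j' (by omega) le_rfl) (hpair (2*k) (by omega) le_rfl)
    (heven (2*k) (by omega) le_rfl) hbot
end

section
/- Let n ≥ 2 and k ≥ 1 be integers, and let E : {1,...,2k} × {1,...,4n} → {1,...,8n} be an array such that: each row is strictly increasing from left to right; each column is weakly increasing from top to bottom; every value t in {1,...,8n} occurs exactly k times among the entries of E; for every row i and every t in {1,...,4n}, exactly one of t and 8n+1−t occurs among the entries of row i; and the bottom row (row 2k) has j-th entry equal to 2j for every 1 ≤ j ≤ 4n. Then E(i,j) = 2j−1 for all 1 ≤ i ≤ k and all 1 ≤ j ≤ 4n, and E(i,j) = 2j for all k+1 ≤ i ≤ 2k and all 1 ≤ j ≤ 4n; in particular the top row is (1,3,5,...,8n−1). -/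
/-!
The cells with entry in `(r * (j - 1), r * N]` number `r * k * (N - j + 1)`, and the bound on the
bottom row keeps them out of the first `j - 1` columns, so they fill the columns `j, …, N`. Hence
column `j` contains exactly the values of `(r * (j - 1), r * j]`, each of them `k` times, and a
weakly increasing column is determined by how often each value occurs in it. The paper's tableau
has `r = 2` and `N = 4 * n`.
-/

section

open Finset

theorem card_filter_mem_of_card_fiber_eq {α β : Type*} [DecidableEq β] {S : Finset α} {T : Finset β}
    {f : α → β} {k : ℕ} (hf : ∀ t ∈ T, #{x ∈ S | f x = t} = k) :
    #{x ∈ S | f x ∈ T} = #T * k := by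
  rw [← sum_card_fiberwise_eq_card_filter, sum_const_nat hf]

theorem le_iff_le_card_filter_le_of_monotoneOn {α : Type*} [LinearOrder α] {f : ℕ → α} {m i : ℕ}
    (hf : MonotoneOn f (Set.Icc 1 m)) (hi : i ∈ Set.Icc 1 m) (v : α) :
    f i ≤ v ↔ i ≤ #{a ∈ Icc 1 m | f a ≤ v} := by
  constructor
  · intro hv
    have hsub : Icc 1 i ⊆ {a ∈ Icc 1 m | f a ≤ v} := fun a ha ↦ by
      rw [mem_Icc] at ha
      have ham : a ∈ Set.Icc 1 m := ⟨ha.1, ha.2.trans hi.2⟩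
      exact mem_filter.2 ⟨mem_Icc.2 ham, (hf ham hi ha.2).trans hv⟩
    simpa only [Nat.card_Icc, Nat.add_sub_cancel] using card_le_card hsub
  · contrapose!
    intro hv
    have hsub : {a ∈ Icc 1 m | f a ≤ v} ⊆ Ico 1 i := fun a ha ↦ by
      obtain ⟨ham, hav⟩ := mem_filter.1 ha
      rw [mem_Icc] at ham
      exact mem_Ico.2 ⟨ham.1, lt_of_not_ge fun hia ↦ (hv.trans_le (hf hi ham hia)).not_ge hav⟩
    have hcard := card_le_card hsub
    rw [Nat.card_Ico] at hcard
    exact hcard.trans_lt (Nat.sub_lt hi.1 one_pos)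

theorem eq_of_monotoneOn_of_card_fiber_eq {f : ℕ → ℕ} {a r k s i : ℕ}
    (hf : MonotoneOn f (Set.Icc 1 (r * k))) (hlt : ∀ i ∈ Set.Icc 1 (r * k), a < f i)
    (hfiber : ∀ t ∈ Set.Ioc a (a + r), #{i ∈ Icc 1 (r * k) | f i = t} = k)
    (hs : s < r) (hi : i ∈ Set.Ioc (s * k) ((s + 1) * k)) :
    f i = a + s + 1 := by
  have hcard : ∀ u ≤ r, #{i ∈ Icc 1 (r * k) | f i ≤ a + u} = u * k := fun u hu ↦ by
    have hfilter : {i ∈ Icc 1 (r * k) | f i ≤ a + u} =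
        {i ∈ Icc 1 (r * k) | f i ∈ Ioc a (a + u)} :=
      filter_congr fun i hi ↦ by rw [mem_Ioc, and_iff_right (hlt i (mem_Icc.1 hi))]
    have hfiber_le : ∀ t ∈ Ioc a (a + u), #{i ∈ Icc 1 (r * k) | f i = t} = k := fun t ht ↦ by
      rw [mem_Ioc] at ht
      exact hfiber t ⟨ht.1, ht.2.trans (Nat.add_le_add_left hu a)⟩
    rw [hfilter, card_filter_mem_of_card_fiber_eq hfiber_le, Nat.card_Ioc, Nat.add_sub_cancel_left]
  have hi_mem : i ∈ Set.Icc 1 (r * k) :=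
    ⟨Nat.one_le_of_lt hi.1, hi.2.trans (Nat.mul_le_mul_right k hs)⟩
  have hlower : ¬f i ≤ a + s := by
    rw [le_iff_le_card_filter_le_of_monotoneOn hf hi_mem, hcard s hs.le]
    exact hi.1.not_ge
  have hupper : f i ≤ a + (s + 1) := by
    rw [le_iff_le_card_filter_le_of_monotoneOn hf hi_mem, hcard (s + 1) hs]
    exact hi.2
  lia

/-- An array with `r * k` rows and `N` columns, both numbered from `1`, whose columns weakly
increase from top to bottom and in which every value of `{1, …, r * N}` occurs exactly `k` times
(the torus-invariance condition). The values of `E` outside the array are unconstrained. -/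
structure IsBalancedArray (r k N : ℕ) (E : ℕ → ℕ → ℕ) : Prop where
  monotoneOn_column : ∀ j ∈ Set.Icc 1 N, MonotoneOn (E · j) (Set.Icc 1 (r * k))
  card_fiber : ∀ t ∈ Set.Icc 1 (r * N), #{p ∈ Icc 1 (r * k) ×ˢ Icc 1 N | E p.1 p.2 = t} = k

namespace IsBalancedArray

variable {r k N i j : ℕ} {E : ℕ → ℕ → ℕ}

theorem entry_le (hE : IsBalancedArray r k N E) (hbot : ∀ j ∈ Set.Icc 1 N, E (r * k) j ≤ r * j)
    (hi : i ∈ Set.Icc 1 (r * k)) (hj : j ∈ Set.Icc 1 N) : E i j ≤ r * j :=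
  (hE.monotoneOn_column j hj hi ⟨hi.1.trans hi.2, le_rfl⟩ hi.2).trans (hbot j hj)

theorem lt_entry (hE : IsBalancedArray r k N E) (hbot : ∀ j ∈ Set.Icc 1 N, E (r * k) j ≤ r * j)
    (hi : i ∈ Set.Icc 1 (r * k)) (hj : j ∈ Set.Icc 1 N) : r * (j - 1) < E i j := by
  have hcells : {p ∈ Icc 1 (r * k) ×ˢ Icc 1 N | E p.1 p.2 ∈ Ioc (r * (j - 1)) (r * N)} =
      Icc 1 (r * k) ×ˢ Ioc (j - 1) N := by
    apply eq_of_subset_of_card_le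
    · rintro ⟨a, b⟩ hab
      simp only [mem_filter, mem_product, mem_Icc, mem_Ioc] at hab ⊢
      obtain ⟨⟨ha, hb⟩, hlt, -⟩ := hab
      exact ⟨ha, Nat.lt_of_mul_lt_mul_left (hlt.trans_le (hE.entry_le hbot ha hb)), hb.2⟩
    · have hfiber : ∀ t ∈ Ioc (r * (j - 1)) (r * N),
          #{p ∈ Icc 1 (r * k) ×ˢ Icc 1 N | E p.1 p.2 = t} = k := fun t ht ↦ by
        rw [mem_Ioc] at ht
        exact hE.card_fiber t ⟨Nat.one_le_of_lt ht.1, ht.2⟩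
      rw [card_filter_mem_of_card_fiber_eq hfiber, card_product, Nat.card_Icc, Nat.card_Ioc,
        Nat.card_Ioc, Nat.add_sub_cancel, ← Nat.mul_sub, Nat.mul_right_comm]
  have hij : (i, j) ∈ Icc 1 (r * k) ×ˢ Ioc (j - 1) N :=
    mem_product.2 ⟨mem_Icc.2 hi, mem_Ioc.2 ⟨Nat.sub_lt hj.1 one_pos, hj.2⟩⟩
  rw [← hcells] at hij
  exact (mem_Ioc.1 (mem_filter.1 hij).2).1

theorem column_eq_of_entry_mem (hE : IsBalancedArray r k N E)
    (hbot : ∀ j ∈ Set.Icc 1 N, E (r * k) j ≤ r * j) {b : ℕ} (hi : i ∈ Set.Icc 1 (r * k))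
    (hb : b ∈ Set.Icc 1 N) (hmem : E i b ∈ Set.Ioc (r * (j - 1)) (r * j)) : b = j := by
  have hjb : j - 1 < b := Nat.lt_of_mul_lt_mul_left (hmem.1.trans_le (hE.entry_le hbot hi hb))
  have hbj : b - 1 < j := Nat.lt_of_mul_lt_mul_left ((hE.lt_entry hbot hi hb).trans_le hmem.2)
  lia

theorem card_column_fiber (hE : IsBalancedArray r k N E)
    (hbot : ∀ j ∈ Set.Icc 1 N, E (r * k) j ≤ r * j) (hj : j ∈ Set.Icc 1 N) {t : ℕ}
    (ht : t ∈ Set.Ioc (r * (j - 1)) (r * j)) : #{i ∈ Icc 1 (r * k) | E i j = t} = k := by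
  have hcells : {p ∈ Icc 1 (r * k) ×ˢ Icc 1 N | E p.1 p.2 = t} =
      {i ∈ Icc 1 (r * k) | E i j = t} ×ˢ {j} := by
    ext ⟨i, b⟩
    simp only [mem_filter, mem_product, mem_Icc, mem_singleton]
    constructor
    · rintro ⟨⟨hi, hb⟩, rfl⟩
      obtain rfl := hE.column_eq_of_entry_mem hbot hi hb ht
      exact ⟨⟨hi, rfl⟩, rfl⟩
    · rintro ⟨⟨hi, rfl⟩, rfl⟩
      exact ⟨⟨hi, hj⟩, rfl⟩
  have hcard := hE.card_fiber t
    ⟨Nat.one_le_of_lt ht.1, ht.2.trans (Nat.mul_le_mul_left r hj.2)⟩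
  rwa [hcells, card_product, card_singleton, mul_one] at hcard

end IsBalancedArray

theorem tableau_determined_by_even_bottom_row_general {r k N : ℕ} {E : ℕ → ℕ → ℕ}
    (hE : IsBalancedArray r k N E) (hbot : ∀ j ∈ Set.Icc 1 N, E (r * k) j ≤ r * j)
    {s i j : ℕ} (hs : s < r) (hi : i ∈ Set.Ioc (s * k) ((s + 1) * k)) (hj : j ∈ Set.Icc 1 N) :
    E i j = r * (j - 1) + s + 1 := by
  have hj_mul : r * (j - 1) + r = r * j := by
    rw [← Nat.mul_succ, Nat.succ_eq_add_one, Nat.sub_add_cancel hj.1]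
  exact eq_of_monotoneOn_of_card_fiber_eq (f := (E · j)) (hE.monotoneOn_column j hj)
    (fun i hi ↦ hE.lt_entry hbot hi hj)
    (fun t ht ↦ hE.card_column_fiber hbot hj (hj_mul ▸ ht)) hs hi

end

/-- Case I: if the bottom row of a torus-invariant standard tableau on
`Spin(8n)/P^{α₄ₙ}` is `(2,4,…,8n)`, then the whole tableau is determined: the top `k`
rows all equal `(1,3,…,8n-1)` and the bottom `k` rows all equal `(2,4,…,8n)`. -/
theorem tableau_determined_by_even_bottom_row (n k : ℕ) (hn : 2 ≤ n) (hk : 1 ≤ k)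
    (E : ℕ → ℕ → ℕ)
    (hrange : ∀ i j, 1 ≤ i → i ≤ 2*k → 1 ≤ j → j ≤ 4*n → 1 ≤ E i j ∧ E i j ≤ 8*n)
    (hrow : ∀ i j j', 1 ≤ i → i ≤ 2*k → 1 ≤ j → j < j' → j' ≤ 4*n → E i j < E i j')
    (hcol : ∀ i i' j, 1 ≤ i → i ≤ i' → i' ≤ 2*k → 1 ≤ j → j ≤ 4*n → E i j ≤ E i' j)
    (hcount : ∀ t, 1 ≤ t → t ≤ 8*n →
      (((Finset.Icc 1 (2*k)) ×ˢ (Finset.Icc 1 (4*n))).filter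
        (fun p => E p.1 p.2 = t)).card = k)
    (hpair : ∀ i, 1 ≤ i → i ≤ 2*k → ∀ t, 1 ≤ t → t ≤ 4*n →
      Xor' (∃ j, 1 ≤ j ∧ j ≤ 4*n ∧ E i j = t)
           (∃ j, 1 ≤ j ∧ j ≤ 4*n ∧ E i j = 8*n + 1 - t))
    (hbot : ∀ j, 1 ≤ j → j ≤ 4*n → E (2*k) j = 2*j) :
    (∀ i j, 1 ≤ i → i ≤ k → 1 ≤ j → j ≤ 4*n → E i j = 2*j - 1) ∧
    (∀ i j, k + 1 ≤ i → i ≤ 2*k → 1 ≤ j → j ≤ 4*n → E i j = 2*j) := by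
  have hE : IsBalancedArray 2 k (4 * n) E :=
    ⟨fun j hj i hi i' hi' hii' ↦ hcol i i' j hi.1 hii' hi'.2 hj.1 hj.2,
      fun t ht ↦ hcount t ht.1 (ht.2.trans_eq (by ring))⟩
  have hentry {s i j : ℕ} := tableau_determined_by_even_bottom_row_general
    (s := s) (i := i) (j := j) hE fun j hj ↦ (hbot j hj.1 hj.2).le
  refine ⟨fun i j hi hik hj hjn ↦ ?_, fun i j hki hik hj hjn ↦ ?_⟩
  · have := hentry two_pos (by grind : i ∈ Set.Ioc (0 * k) ((0 + 1) * k)) ⟨hj, hjn⟩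
    lia
  · have := hentry one_lt_two (by grind : i ∈ Set.Ioc (1 * k) ((1 + 1) * k)) ⟨hj, hjn⟩
    lia
end

section
/- Let n ≥ 4 and k ≥ 1 be integers and let r(1) ≤ r(2) ≤ ... ≤ r(4k) be a weakly increasing sequence of integers with values in {1,...,2n} such that: r(2i−1) = r(2i) for every 1 ≤ i ≤ 2k; whenever both r(2i) and r(2i+1) lie in {n, n+1} one has r(2i) ≡ r(2i+1) (mod 2); and for every t in {1,...,2n} the number of indices i with r(i) = t equals the number of indices i with r(i) = 2n+1−t. Then no r(i) lies in {n, n+1}, and there exists j with 1 ≤ j ≤ n−1 such that r(1) = r(2) = j and r(4k−1) = r(4k) = 2n+1−j. -/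
/-!
If both `n` and `n + 1` occurred, monotonicity would place them side by side somewhere in the
column. Inside a pair the two neighbours are equal, and across a pair boundary the parity condition
keeps `n` and `n + 1` apart, so at most one of the two values occurs. They are exchanged by
`t ↦ 2n + 1 - t`, and the set of entries is invariant under this reflection, so neither occurs. The
reflection also exchanges the smallest and the largest entry, which are the first and the last one.
-/

theorem exists_mem_Ico_eq_and_succ_eq_of_covBy {α : Type*} [PartialOrder α] {f : ℕ → α} {a b : α}
    (hab : a ⋖ b) {i j : ℕ} (hij : i ≤ j) (hf : MonotoneOn f (Set.Icc i j))
    (hi : f i = a) (hj : f j = b) : ∃ c ∈ Set.Ico i j, f c = a ∧ f (c + 1) = b := by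
  induction j, hij using Nat.le_induction with
  | base => exact absurd (hi.symm.trans hj) hab.ne
  | succ j hij ih =>
    have hle : a ≤ f j := hi ▸ hf ⟨le_rfl, by omega⟩ ⟨hij, by omega⟩ hij
    have hge : f j ≤ b := hj ▸ hf ⟨hij, by omega⟩ ⟨by omega, le_rfl⟩ j.le_succ
    rcases hab.eq_or_eq hle hge with hja | hjb
    · exact ⟨j, ⟨hij, j.lt_succ_self⟩, hja, hj⟩
    · obtain ⟨c, hc, hstep⟩ := ih (hf.mono (Set.Icc_subset_Icc_right j.le_succ)) hjb
      exact ⟨c, Set.Ico_subset_Ico_right j.le_succ hc, hstep⟩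

theorem ne_of_covBy_of_paired {α : Type*} [PartialOrder α] {f : ℕ → α} {a b : α} {m : ℕ}
    (hab : a ⋖ b) (hf : MonotoneOn f (Set.Icc 1 (2 * m)))
    (hpair : ∀ i, 1 ≤ i → i ≤ m → f (2 * i - 1) = f (2 * i))
    (hboundary : ∀ i, 1 ≤ i → i < m → f (2 * i) = a → f (2 * i + 1) ≠ b)
    {i j : ℕ} (hi : i ∈ Set.Icc 1 (2 * m)) (hj : j ∈ Set.Icc 1 (2 * m)) (hia : f i = a) :
    f j ≠ b := by
  intro hjb
  have hij : i ≤ j := by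
    by_contra! hji
    exact hab.lt.not_ge (hia ▸ hjb ▸ hf hj hi hji.le)
  obtain ⟨c, ⟨hic, hcj⟩, hca, hcb⟩ := exists_mem_Ico_eq_and_succ_eq_of_covBy hab hij
    (hf.mono (Set.Icc_subset_Icc hi.1 hj.2)) hia hjb
  have hc_pos : 1 ≤ c := hi.1.trans hic
  have hc_lt : c < 2 * m := hcj.trans_le hj.2
  obtain ⟨d, rfl | rfl⟩ := c.even_or_odd'
  · exact hboundary d (by omega) (by omega) hca hcb
  · have hd : f (2 * d + 1) = f (2 * d + 1 + 1) := hpair (d + 1) (by omega) (by omega)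
    exact hab.ne (hca.symm.trans (hd.trans hcb))

theorem exists_add_eq_of_card_filter_eq {ι : Type*} {s : Finset ι} {f : ι → ℕ} {N : ℕ}
    (hrange : ∀ i ∈ s, 1 ≤ f i ∧ f i ≤ N)
    (hcount : ∀ t, 1 ≤ t → t ≤ N →
      (s.filter (fun i => f i = t)).card = (s.filter (fun i => f i = N + 1 - t)).card) :
    ∀ i ∈ s, ∃ i' ∈ s, f i + f i' = N + 1 := by
  intro i hi
  obtain ⟨hpos, hle⟩ := hrange i hi
  have hcard_pos : 0 < (s.filter (fun i' => f i' = N + 1 - f i)).card :=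
    hcount (f i) hpos hle ▸ Finset.card_pos.mpr ⟨i, Finset.mem_filter.mpr ⟨hi, rfl⟩⟩
  obtain ⟨i', hi'⟩ := Finset.card_pos.mp hcard_pos
  obtain ⟨hi's, hfi'⟩ := Finset.mem_filter.mp hi'
  exact ⟨i', hi's, by omega⟩

theorem map_left_add_map_right_eq_of_forall_exists_add_eq {ι M : Type*} [Preorder ι]
    [AddCommMonoid M] [PartialOrder M] [IsOrderedAddMonoid M] {f : ι → M} {a b : ι} {s : M}
    (hab : a ≤ b) (hf : MonotoneOn f (Set.Icc a b))
    (hreflect : ∀ i ∈ Set.Icc a b, ∃ i' ∈ Set.Icc a b, f i + f i' = s) : f a + f b = s := by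
  have ha : a ∈ Set.Icc a b := Set.left_mem_Icc.mpr hab
  have hb : b ∈ Set.Icc a b := Set.right_mem_Icc.mpr hab
  obtain ⟨a', ha', hsa⟩ := hreflect a ha
  obtain ⟨b', hb', hsb⟩ := hreflect b hb
  apply le_antisymm
  · calc f a + f b ≤ f b' + f b := by gcongr; exact hf ha hb' hb'.1
      _ = s := by rw [add_comm, hsb]
  · calc s = f a + f a' := hsa.symm
      _ ≤ f a + f b := by gcongr; exact hf ha' hb ha'.2

theorem spin_column_tableau_degree_one_factor_general (n m : ℕ) (hm : 1 ≤ m) (r : ℕ → ℕ)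
    (hmono : ∀ i i', 1 ≤ i → i ≤ i' → i' ≤ 2 * m → r i ≤ r i')
    (hpos : 1 ≤ r 1)
    (hpair : ∀ i, 1 ≤ i → i ≤ m → r (2 * i - 1) = r (2 * i))
    (hmod : ∀ i, 1 ≤ i → i ≤ m - 1 →
      (r (2 * i) = n ∨ r (2 * i) = n + 1) → (r (2 * i + 1) = n ∨ r (2 * i + 1) = n + 1) →
      r (2 * i) % 2 = r (2 * i + 1) % 2)
    (hreflect : ∀ i ∈ Set.Icc 1 (2 * m), ∃ i' ∈ Set.Icc 1 (2 * m), r i + r i' = 2 * n + 1) :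
    (∀ i, 1 ≤ i → i ≤ 2 * m → r i ≠ n ∧ r i ≠ n + 1) ∧
    (∃ j, 1 ≤ j ∧ j ≤ n - 1 ∧ r 1 = j ∧ r 2 = j ∧
      r (2 * m - 1) = 2 * n + 1 - j ∧ r (2 * m) = 2 * n + 1 - j) := by
  have hmonoOn : MonotoneOn r (Set.Icc 1 (2 * m)) :=
    fun i hi i' hi' hii' => hmono i i' hi.1 hii' hi'.2
  have hboundary : ∀ i, 1 ≤ i → i < m → r (2 * i) = n → r (2 * i + 1) ≠ n + 1 := by
    intro i hi him hn hn'
    have hparity := hmod i hi (by omega) (.inl hn) (.inr hn')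
    omega
  have hexclusive {i i' : ℕ} (hi : i ∈ Set.Icc 1 (2 * m)) (hi' : i' ∈ Set.Icc 1 (2 * m)) :
      r i = n → r i' ≠ n + 1 :=
    ne_of_covBy_of_paired (Order.covBy_add_one n) hmonoOn hpair hboundary hi hi'
  have havoid : ∀ i, 1 ≤ i → i ≤ 2 * m → r i ≠ n ∧ r i ≠ n + 1 := by
    intro i hi him
    obtain ⟨i', hi', hsum⟩ := hreflect i ⟨hi, him⟩
    exact ⟨fun hn => hexclusive ⟨hi, him⟩ hi' hn (by omega),
      fun hn => hexclusive hi' ⟨hi, him⟩ (by omega) hn⟩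
  have hsum : r 1 + r (2 * m) = 2 * n + 1 :=
    map_left_add_map_right_eq_of_forall_exists_add_eq (by omega) hmonoOn hreflect
  have hle : r 1 ≤ r (2 * m) := hmono 1 (2 * m) le_rfl (by omega) le_rfl
  have hne : r 1 ≠ n := (havoid 1 le_rfl (by omega)).1
  have hlast : r (2 * m) = 2 * n + 1 - r 1 := by omega
  exact ⟨havoid, r 1, hpos, by omega, rfl, (hpair 1 le_rfl hm).symm,
    (hpair m hm le_rfl).trans hlast, hlast⟩

/-- a single-column `Spin(2n,ℂ)`-standard torus-invariant tableau of shape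
`(4k)` avoids the values `n, n+1` and has a degree-one factor `(j,j,2n+1-j,2n+1-j)`. -/
theorem spin_column_tableau_degree_one_factor (n k : ℕ) (hn : 4 ≤ n) (hk : 1 ≤ k)
    (r : ℕ → ℕ)
    (hmono : ∀ i i', 1 ≤ i → i ≤ i' → i' ≤ 4*k → r i ≤ r i')
    (hrange : ∀ i, 1 ≤ i → i ≤ 4*k → 1 ≤ r i ∧ r i ≤ 2*n)
    (hpair : ∀ i, 1 ≤ i → i ≤ 2*k → r (2*i - 1) = r (2*i))
    (hmod : ∀ i, 1 ≤ i → i ≤ 2*k - 1 →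
      (r (2*i) = n ∨ r (2*i) = n + 1) → (r (2*i + 1) = n ∨ r (2*i + 1) = n + 1) →
      r (2*i) % 2 = r (2*i + 1) % 2)
    (hcount : ∀ t, 1 ≤ t → t ≤ 2*n →
      ((Finset.Icc 1 (4*k)).filter (fun i => r i = t)).card =
      ((Finset.Icc 1 (4*k)).filter (fun i => r i = 2*n + 1 - t)).card) :
    (∀ i, 1 ≤ i → i ≤ 4*k → r i ≠ n ∧ r i ≠ n + 1) ∧
    (∃ j, 1 ≤ j ∧ j ≤ n - 1 ∧ r 1 = j ∧ r 2 = j ∧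
      r (4*k - 1) = 2*n + 1 - j ∧ r (4*k) = 2*n + 1 - j) := by
  rw [show 4 * k = 2 * (2 * k) by ring] at hmono hrange hcount ⊢
  have hreflect := exists_add_eq_of_card_filter_eq (s := Finset.Icc 1 (2 * (2 * k)))
    (fun i hi => hrange i (Finset.mem_Icc.mp hi).1 (Finset.mem_Icc.mp hi).2) hcount
  exact spin_column_tableau_degree_one_factor_general n (2 * k) (by omega) r hmono
    (hrange 1 le_rfl (by omega)).1 hpair hmod
    (by simpa only [Finset.mem_Icc, Set.mem_Icc] using hreflect)
end

section
/- Let φ : ℂ[z1, z2, z3, z4, z5, z6, z7, z8, z9, z10] → ℂ[x1, x2, x3, x4] be the ℂ-algebra homomorphism determined by z1 ↦ x1², z2 ↦ x2², z3 ↦ x3², z4 ↦ x4², z5 ↦ x1x2, z6 ↦ x1x3, z7 ↦ x1x4, z8 ↦ x2x3, z9 ↦ x2x4, z10 ↦ x3x4. Then the kernel of φ is the ideal of ℂ[z1,...,z10] generated by the twenty elements z1z2 − z5², z1z3 − z6², z1z4 − z7², z1z8 − z5z6, z1z9 − z5z7, z1z10 − z6z7, z2z3 − z8², z2z4 − z9²,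 z2z6 − z5z8, z2z7 − z5z9, z2z10 − z8z9, z3z4 − z10², z3z5 − z6z8, z3z7 − z6z10, z3z9 − z8z10, z4z5 − z7z9, z4z6 − z7z10, z4z8 − z9z10, z5z10 − z6z9, z6z9 − z7z8. -/
/-!
Let `z : Sym2 ι → A` satisfy the exchange relations `z_ij z_kl = z_ik z_jl`. Writing a monomial of
even degree in the `xᵢ` as a product of pairs `xᵢxⱼ` and replacing each pair by `z_ij` gives a
value that does not depend on the pairing, because any two pairings differ by exchanges. This
defines a linear map `ψ` on `R[x]` with `ψ ∘ veronese = aeval z`, so `aeval z` kills the kernel of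
the Veronese map. For `z` the classes of the variables modulo the ideal of exchange relations,
that kernel lies in the ideal.

For `ℙ³` the exchange relations are, up to symmetry, the 21 distinct `2 × 2` minors of the generic
symmetric `4 × 4` matrix. Twenty of them are the listed quadrics, and the remaining one,
`z₁₂z₃₄ - z₁₄z₂₃`, is the sum of the last two.
-/

open MvPolynomial

section ExchangeRelations

variable {ι A : Type*}

/-- The relations `z_ij z_kl = z_ik z_jl` satisfied by the products `z_ij = xᵢxⱼ`, that is, the
vanishing of the `2 × 2` minors of the symmetric matrix `z`. -/
def SatisfiesExchange [Mul A] (z : Sym2 ι → A) : Prop :=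
  ∀ i j k l, z s(i, j) * z s(k, l) = z s(i, k) * z s(j, l)

theorem SatisfiesExchange.of_lt [LinearOrder ι] [CommMagma A] {z : Sym2 ι → A}
    (h : ∀ i j k l, i < l → j < k → z s(i, j) * z s(k, l) = z s(i, k) * z s(j, l)) :
    SatisfiesExchange z := by
  have of_row_lt (i j k l : ι) (hil : i < l) :
      z s(i, j) * z s(k, l) = z s(i, k) * z s(j, l) := by
    rcases lt_trichotomy j k with hjk | rfl | hkj
    · exact h i j k l hil hjk
    · rfl
    · exact (h i k j l hil hkj).symm
  intro i j k l
  rcases lt_trichotomy i l with hil | rfl | hli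
  · exact of_row_lt i j k l hil
  · rw [mul_comm, Sym2.eq_swap (a := k), Sym2.eq_swap (a := j)]
  · calc z s(i, j) * z s(k, l) = z s(l, k) * z s(j, i) := by
          rw [mul_comm, Sym2.eq_swap (a := k), Sym2.eq_swap (a := i)]
      _ = z s(l, j) * z s(k, i) := of_row_lt l k j i hli
      _ = z s(i, k) * z s(j, l) := by
          rw [mul_comm, Sym2.eq_swap (a := k), Sym2.eq_swap (a := l)]

/-- The product of `z` over consecutive pairs of a list. Lists of odd length, which correspond to
monomials outside the image of the Veronese map, get the value `0`. -/
def pairProd [MonoidWithZero A] (z : Sym2 ι → A) : List ι → A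
  | [] => 1
  | [_] => 0
  | i :: j :: l => z s(i, j) * pairProd z l

/-- The statement for `a :: l` is carried through the induction because prepending an element
shifts the pairing by one. -/
theorem pairProd_eq_and_cons_eq_of_perm [MonoidWithZero A] {z : Sym2 ι → A}
    (hz : SatisfiesExchange z) {l l' : List ι} (h : l.Perm l') :
    pairProd z l = pairProd z l' ∧ ∀ a, pairProd z (a :: l) = pairProd z (a :: l') := by
  induction h with
  | nil => exact ⟨rfl, fun _ => rfl⟩
  | cons i _ ih => exact ⟨ih.2 i, fun a => congrArg (z s(a, i) * ·) ih.1⟩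
  | swap i j l =>
    refine ⟨by simp only [pairProd, Sym2.eq_swap], fun a => ?_⟩
    cases l with
    | nil => simp only [pairProd, mul_zero]
    | cons k l => simp only [pairProd, ← mul_assoc, hz a j i k]
  | trans _ _ ih₁ ih₂ => exact ⟨ih₁.1.trans ih₂.1, fun a => (ih₁.2 a).trans (ih₂.2 a)⟩

/-- `pairProd` as a function of the underlying multiset. -/
def multisetPairProd [MonoidWithZero A] {z : Sym2 ι → A} (hz : SatisfiesExchange z) :
    Multiset ι → A :=
  Quot.lift (pairProd z) fun _ _ h => (pairProd_eq_and_cons_eq_of_perm hz h).1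

theorem multisetPairProd_cons_cons [MonoidWithZero A] {z : Sym2 ι → A}
    (hz : SatisfiesExchange z) (i j : ι) (s : Multiset ι) :
    multisetPairProd hz (i ::ₘ j ::ₘ s) = z s(i, j) * multisetPairProd hz s :=
  Quot.inductionOn s fun _ => rfl

end ExchangeRelations

section PairLinearMap

variable {ι A R : Type*} [CommSemiring R] [Semiring A] [Algebra R A] {z : Sym2 ι → A}

variable (R) in
/-- The linear map replacing pairs `xᵢxⱼ` in a monomial by `z_ij`; monomials of odd degree are
sent to `0`. It is not multiplicative, but it inverts the Veronese map up to `aeval z`. -/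
noncomputable def pairLinearMap (hz : SatisfiesExchange z) : MvPolynomial ι R →ₗ[R] A :=
  (basisMonomials ι R).constr R fun e => multisetPairProd hz e.toMultiset

theorem pairLinearMap_monomial_one (hz : SatisfiesExchange z) (e : ι →₀ ℕ) :
    pairLinearMap R hz (monomial e 1) = multisetPairProd hz e.toMultiset := by
  simpa only [pairLinearMap, coe_basisMonomials] using (basisMonomials ι R).constr_basis R _ e

theorem pairLinearMap_one (hz : SatisfiesExchange z) : pairLinearMap R hz 1 = 1 := by
  rw [← C_1, C_apply, pairLinearMap_monomial_one, map_zero]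
  rfl

theorem pairLinearMap_X_mul_X_mul (hz : SatisfiesExchange z) (i j : ι) (p : MvPolynomial ι R) :
    pairLinearMap R hz (X i * X j * p) = z s(i, j) * pairLinearMap R hz p := by
  suffices pairLinearMap R hz ∘ₗ LinearMap.mulLeft R (X i * X j) =
      LinearMap.mulLeft R (z s(i, j)) ∘ₗ pairLinearMap R hz from LinearMap.congr_fun this p
  refine (basisMonomials ι R).ext fun e => ?_
  simp only [coe_basisMonomials, LinearMap.comp_apply, LinearMap.mulLeft_apply, X, monomial_mul,
    one_mul, pairLinearMap_monomial_one, map_add, Finsupp.toMultiset_single, one_smul, add_assoc,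
    Multiset.singleton_add, multisetPairProd_cons_cons]

end PairLinearMap

section Veronese

variable (R ι : Type*)

/-- The degree-2 Veronese map `z_ij ↦ xᵢxⱼ`, with source variables indexed by unordered pairs. -/
noncomputable def veronese [CommSemiring R] :
    MvPolynomial (Sym2 ι) R →ₐ[R] MvPolynomial ι R :=
  aeval fun s => (s.map X).mul

/-- The ideal generated by the exchange relations among the variables `z_ij`. -/
noncomputable def exchangeIdeal [CommRing R] : Ideal (MvPolynomial (Sym2 ι) R) :=
  Ideal.span {p | ∃ i j k l, p = X s(i, j) * X s(k, l) - X s(i, k) * X s(j, l)}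

variable {R ι}

theorem veronese_X [CommSemiring R] (i j : ι) : veronese R ι (X s(i, j)) = X i * X j := by
  rw [veronese, aeval_X, Sym2.map_mk, Sym2.mul_mk]

theorem pairLinearMap_veronese {A : Type*} [CommSemiring R] [CommSemiring A] [Algebra R A]
    {z : Sym2 ι → A} (hz : SatisfiesExchange z) (p : MvPolynomial (Sym2 ι) R) :
    pairLinearMap R hz (veronese R ι p) = aeval z p := by
  induction p using MvPolynomial.induction_on with
  | C a =>
    rw [← algebraMap_eq, AlgHom.commutes, AlgHom.commutes, Algebra.algebraMap_eq_smul_one,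
      map_smul, pairLinearMap_one, Algebra.algebraMap_eq_smul_one]
  | add p q hp hq => rw [map_add, map_add, map_add, hp, hq]
  | mul_X p s hp =>
    induction s with | _ i j
    rw [map_mul, veronese_X, mul_comm, pairLinearMap_X_mul_X_mul, hp, map_mul, aeval_X, mul_comm]

variable [CommRing R]

theorem satisfiesExchange_quotientMk_X :
    SatisfiesExchange fun s => Ideal.Quotient.mk (exchangeIdeal R ι) (X s) := by
  intro i j k l
  rw [← map_mul, ← map_mul]
  exact Ideal.Quotient.eq.2 (Ideal.subset_span ⟨i, j, k, l, rfl⟩)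

theorem ker_veronese : RingHom.ker (veronese R ι) = exchangeIdeal R ι := by
  apply le_antisymm
  · intro p hp
    rw [← Ideal.Quotient.eq_zero_iff_mem, ← Ideal.Quotient.mkₐ_eq_mk R, mkₐ_eq_aeval,
      ← pairLinearMap_veronese satisfiesExchange_quotientMk_X, RingHom.mem_ker.1 hp, map_zero]
  · rw [exchangeIdeal, Ideal.span_le]
    rintro _ ⟨i, j, k, l, rfl⟩
    rw [SetLike.mem_coe, RingHom.mem_ker]
    simp only [map_sub, map_mul, veronese_X]
    ring

end Veronese

section ProjectiveThreeSpace

/-- The numbering of the coordinates `z_ij` of `ℙ⁹` by a single index: first the four squares, then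
the mixed products in lexicographic order. -/
def pairNumbering : Fin 10 ≃ Sym2 (Fin 4) where
  toFun := ![s(0, 0), s(1, 1), s(2, 2), s(3, 3), s(0, 1), s(0, 2), s(0, 3), s(1, 2), s(1, 3),
    s(2, 3)]
  invFun := Sym2.lift ⟨![![0, 4, 5, 6], ![4, 1, 7, 8], ![5, 7, 2, 9], ![6, 8, 9, 3]], by decide⟩
  left_inv := by decide
  right_inv := by decide

variable (R : Type*) [CommRing R]

/-- The twenty generators of the ideal of the second Veronese embedding of `ℙ³`. -/
def veroneseQuadrics : Set (MvPolynomial (Fin 10) R) :=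
  {X 0 * X 1 - X 4 ^ 2, X 0 * X 2 - X 5 ^ 2, X 0 * X 3 - X 6 ^ 2,
    X 0 * X 7 - X 4 * X 5, X 0 * X 8 - X 4 * X 6, X 0 * X 9 - X 5 * X 6,
    X 1 * X 2 - X 7 ^ 2, X 1 * X 3 - X 8 ^ 2, X 1 * X 5 - X 4 * X 7,
    X 1 * X 6 - X 4 * X 8, X 1 * X 9 - X 7 * X 8, X 2 * X 3 - X 9 ^ 2,
    X 2 * X 4 - X 5 * X 7, X 2 * X 6 - X 5 * X 9, X 2 * X 8 - X 7 * X 9,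
    X 3 * X 4 - X 6 * X 8, X 3 * X 5 - X 6 * X 9, X 3 * X 7 - X 8 * X 9,
    X 4 * X 9 - X 5 * X 8, X 5 * X 8 - X 6 * X 7}

variable {R}

theorem satisfiesExchange_of_veroneseQuadrics {A : Type*} [CommRing A] [Algebra R A]
    {y : Fin 10 → A} (hy : ∀ p ∈ veroneseQuadrics R, aeval y p = 0) :
    SatisfiesExchange fun s => y (pairNumbering.symm s) := by
  simp only [veroneseQuadrics, Set.forall_mem_insert, Set.mem_singleton_iff, forall_eq, map_sub,
    map_mul, map_pow, aeval_X, sub_eq_zero] at hy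
  obtain ⟨h₁, h₂, h₃, h₄, h₅, h₆, h₇, h₈, h₉, h₁₀, h₁₁, h₁₂, h₁₃, h₁₄, h₁₅, h₁₆, h₁₇, h₁₈, h₁₉,
    h₂₀⟩ := hy
  refine .of_lt fun i j k l hil hjk => ?_
  -- Each case is one of the `hᵢ` up to symmetry, except `y 4 * y 9 = y 6 * y 7`, which combines
  -- `h₁₉` and `h₂₀`.
  fin_cases i <;> fin_cases l <;> try exact absurd hil (by decide)
  all_goals fin_cases j <;> fin_cases k <;> try exact absurd hjk (by decide)
  all_goals
    simp only [pairNumbering, Equiv.coe_fn_symm_mk, Sym2.lift_mk, Fin.zero_eta, Fin.mk_one,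
      Fin.reduceFinMk, Matrix.cons_val]
    grind only

theorem exchangeIdeal_le_comap_span_veroneseQuadrics :
    exchangeIdeal R (Fin 4) ≤
      (Ideal.span (veroneseQuadrics R)).comap (rename pairNumbering.symm) := by
  have mk_eq_zero : ∀ p ∈ veroneseQuadrics R,
      aeval (fun k => Ideal.Quotient.mk (Ideal.span (veroneseQuadrics R)) (X k)) p = 0 := by
    intro p hp
    rw [← mkₐ_eq_aeval]
    exact Ideal.Quotient.eq_zero_iff_mem.2 (Ideal.subset_span hp)
  rw [exchangeIdeal, Ideal.span_le]
  rintro _ ⟨i, j, k, l, rfl⟩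
  rw [SetLike.mem_coe, Ideal.mem_comap, ← Ideal.Quotient.eq_zero_iff_mem]
  simp only [map_sub, map_mul, rename_X, sub_eq_zero]
  exact satisfiesExchange_of_veroneseQuadrics mk_eq_zero i j k l

theorem aeval_eq_veronese_comp_rename :
    (aeval ![X 0 ^ 2, X 1 ^ 2, X 2 ^ 2, X 3 ^ 2,
        X 0 * X 1, X 0 * X 2, X 0 * X 3, X 1 * X 2, X 1 * X 3, X 2 * X 3] :
        MvPolynomial (Fin 10) R →ₐ[R] MvPolynomial (Fin 4) R) =
      (veronese R (Fin 4)).comp (rename pairNumbering) := by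
  ext1 k
  rw [AlgHom.comp_apply, aeval_X, rename_X]
  fin_cases k <;> simp [pairNumbering, veronese_X, pow_two]

theorem veronese_rename_eq_zero_of_mem_veroneseQuadrics :
    ∀ p ∈ veroneseQuadrics R, veronese R (Fin 4) (rename pairNumbering p) = 0 := by
  simp only [← AlgHom.comp_apply, ← aeval_eq_veronese_comp_rename]
  simp only [veroneseQuadrics, Set.forall_mem_insert, Set.mem_singleton_iff, forall_eq, map_sub,
    map_mul, map_pow, aeval_X, Matrix.cons_val]
  and_intros <;> ring

end ProjectiveThreeSpace

theorem kernel_veronese_P3_general (R : Type*) [CommRing R] :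
    RingHom.ker (aeval ![(X 0 ^ 2 : MvPolynomial (Fin 4) R), X 1 ^ 2, X 2 ^ 2, X 3 ^ 2,
        X 0 * X 1, X 0 * X 2, X 0 * X 3, X 1 * X 2, X 1 * X 3, X 2 * X 3] :
        MvPolynomial (Fin 10) R →ₐ[R] MvPolynomial (Fin 4) R) =
      Ideal.span (veroneseQuadrics R) := by
  rw [aeval_eq_veronese_comp_rename]
  apply le_antisymm
  · intro p hp
    have rename_mem : rename pairNumbering p ∈ exchangeIdeal R (Fin 4) := by
      rwa [← ker_veronese]
    simpa only [Ideal.mem_comap, rename_rename, Equiv.symm_comp_self, rename_id_apply] using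
      exchangeIdeal_le_comap_span_veroneseQuadrics rename_mem
  · exact Ideal.span_le.2 veronese_rename_eq_zero_of_mem_veroneseQuadrics

/-- the kernel of `ℂ[z₁,…,z₁₀] → ℂ[x₁,…,x₄]` (with `zᵢ = X (i-1)`,
`xᵢ = X (i-1)`), `z₁ ↦ x₁²`, `z₂ ↦ x₂²`, `z₃ ↦ x₃²`, `z₄ ↦ x₄²`, `z₅ ↦ x₁x₂`,
`z₆ ↦ x₁x₃`, `z₇ ↦ x₁x₄`, `z₈ ↦ x₂x₃`, `z₉ ↦ x₂x₄`, `z₁₀ ↦ x₃x₄`, is generated by the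
twenty listed quadrics (degree-2 Veronese of ℙ³). -/
theorem kernel_veronese_P3 :
    RingHom.ker (aeval ![(X 0 ^ 2 : MvPolynomial (Fin 4) ℂ), X 1 ^ 2, X 2 ^ 2, X 3 ^ 2,
        X 0 * X 1, X 0 * X 2, X 0 * X 3, X 1 * X 2, X 1 * X 3, X 2 * X 3] :
        MvPolynomial (Fin 10) ℂ →ₐ[ℂ] MvPolynomial (Fin 4) ℂ) =
      Ideal.span ({X 0 * X 1 - X 4 ^ 2, X 0 * X 2 - X 5 ^ 2, X 0 * X 3 - X 6 ^ 2,
        X 0 * X 7 - X 4 * X 5, X 0 * X 8 - X 4 * X 6, X 0 * X 9 - X 5 * X 6,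
        X 1 * X 2 - X 7 ^ 2, X 1 * X 3 - X 8 ^ 2, X 1 * X 5 - X 4 * X 7,
        X 1 * X 6 - X 4 * X 8, X 1 * X 9 - X 7 * X 8, X 2 * X 3 - X 9 ^ 2,
        X 2 * X 4 - X 5 * X 7, X 2 * X 6 - X 5 * X 9, X 2 * X 8 - X 7 * X 9,
        X 3 * X 4 - X 6 * X 8, X 3 * X 5 - X 6 * X 9, X 3 * X 7 - X 8 * X 9,
        X 4 * X 9 - X 5 * X 8, X 5 * X 8 - X 6 * X 7} :
        Set (MvPolynomial (Fin 10) ℂ)) :=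
  kernel_veronese_P3_general ℂ
end

section
/- Let I be the ideal of the polynomial ring ℂ[z1, z2, z3, z4, z5, z6] generated by the six elements z1z2 − z4², z1z3 − z5², z2z3 − z6², z1z6 − z4z5, z2z5 − z4z6, z3z4 − z5z6. Then the Krull dimension of the quotient ring ℂ[z1,...,z6]/I equals 3. -/
open MvPolynomial

/-!
Let `z₀, …, z₅` be the coordinates of the quotient ring `A`. Each `zⱼ ^ 2` is a product of two of
`z₀, z₁, z₂`, so `A` is integral over the subalgebra generated by `z₀, z₁, z₂`. These three are
algebraically independent, because the Veronese parametrization `A → R[t₀, t₁, t₂]` sends them to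
`t₀ ^ 2, t₁ ^ 2, t₂ ^ 2`. Hence `A` is an integral extension of a polynomial ring in three
variables, and integral extensions preserve the Krull dimension.
-/

section IntegralExtension

variable {R S : Type*} [CommRing R] [CommRing S] [Algebra R S]

theorem ringKrullDim_le_of_isIntegral [Algebra.IsIntegral R S] :
    ringKrullDim S ≤ ringKrullDim R :=
  Order.krullDim_le_of_strictMono (PrimeSpectrum.comap (algebraMap R S))
    fun _ _ h ↦ Ideal.IsIntegral.comap_lt_comap h

theorem ringKrullDim_le_of_hasGoingUp [Algebra.HasGoingUp R S]
    (hsurj : Function.Surjective (PrimeSpectrum.comap (algebraMap R S))) :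
    ringKrullDim R ≤ ringKrullDim S := by
  refine iSup_le fun l ↦ ?_
  obtain ⟨P, hP⟩ := hsurj l.head
  have : P.asIdeal.LiesOver l.head.asIdeal := ⟨congrArg PrimeSpectrum.asIdeal hP.symm⟩
  obtain ⟨L, hL, -⟩ := Ideal.exists_ltSeries_of_hasGoingUp l P.asIdeal
  exact hL ▸ Order.LTSeries.length_le_krullDim L

theorem ringKrullDim_eq_of_isIntegral [Algebra.IsIntegral R S] [FaithfulSMul R S] :
    ringKrullDim S = ringKrullDim R :=
  ringKrullDim_le_of_isIntegral.antisymm <|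
    ringKrullDim_le_of_hasGoingUp (Algebra.IsIntegral.comap_surjective R S)

theorem isIntegral_of_adjoin_eq_top {A : Type*} [CommRing A] [Algebra R A] [Algebra S A]
    [IsScalarTower R S A] {s : Set A} (hs : Algebra.adjoin R s = ⊤)
    (hint : ∀ x ∈ s, IsIntegral S x) : Algebra.IsIntegral S A := by
  have hle : Algebra.adjoin R s ≤ (integralClosure S A).restrictScalars R :=
    Algebra.adjoin_le hint
  exact ⟨fun a ↦ hle (hs ▸ Algebra.mem_top)⟩

theorem ringKrullDim_eq_add_of_algebraicIndependent [IsNoetherianRing R] {ι : Type*} [Finite ι]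
    {x : ι → S} (hx : AlgebraicIndependent R x)
    [Algebra.IsIntegral (Algebra.adjoin R (Set.range x)) S] :
    ringKrullDim S = ringKrullDim R + Nat.card ι := by
  rw [ringKrullDim_eq_of_isIntegral (R := Algebra.adjoin R (Set.range x)),
    ← ringKrullDim_eq_of_ringEquiv hx.aevalEquiv.toRingEquiv,
    MvPolynomial.ringKrullDim_of_isNoetherianRing]

end IntegralExtension

theorem algebraicIndependent_X_pow (σ R : Type*) [CommRing R] {n : ℕ} (hn : 0 < n) :
    AlgebraicIndependent R fun i : σ ↦ (X i ^ n : MvPolynomial σ R) :=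
  expand_injective hn

section Veronese

variable (R : Type*) [CommRing R]

/-- The ideal of the quadratic Veronese surface in `ℙ⁵`: the `2 × 2` minors of the symmetric matrix
with diagonal entries `X 0, X 1, X 2` and entries `X 3, X 4, X 5` in the positions
`(0, 1), (0, 2), (1, 2)`. -/
noncomputable def veroneseIdeal : Ideal (MvPolynomial (Fin 6) R) :=
  Ideal.span {X 0 * X 1 - X 3 ^ 2, X 0 * X 2 - X 4 ^ 2, X 1 * X 2 - X 5 ^ 2,
    X 0 * X 5 - X 3 * X 4, X 1 * X 4 - X 3 * X 5, X 2 * X 3 - X 4 * X 5}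

/-- The position `(a, b)` of the variable `X j` in the symmetric matrix of `veroneseIdeal`; the
Veronese embedding has `t a * t b` as its `j`-th coordinate. -/
def veroneseIndex : Fin 6 → Fin 3 × Fin 3 :=
  ![(0, 0), (1, 1), (2, 2), (0, 1), (0, 2), (1, 2)]

/-- The comorphism of the affine Veronese parametrization
`(t₀, t₁, t₂) ↦ (t₀ ^ 2, t₁ ^ 2, t₂ ^ 2, t₀ * t₁, t₀ * t₂, t₁ * t₂)`. -/
noncomputable def veroneseMap : MvPolynomial (Fin 6) R →ₐ[R] MvPolynomial (Fin 3) R :=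
  aeval fun j ↦ X (veroneseIndex j).1 * X (veroneseIndex j).2

theorem veroneseIdeal_le_ker_veroneseMap : veroneseIdeal R ≤ RingHom.ker (veroneseMap R) := by
  rw [veroneseIdeal, Ideal.span_le]
  rintro p (rfl | rfl | rfl | rfl | rfl | rfl) <;>
    simp only [SetLike.mem_coe, RingHom.mem_ker, veroneseMap, veroneseIndex, map_sub, map_mul,
      map_pow, aeval_X, Matrix.cons_val] <;>
    ring

/-- The `j`-th coordinate function on the affine cone over the Veronese surface. -/
noncomputable def veroneseCoord (j : Fin 6) : MvPolynomial (Fin 6) R ⧸ veroneseIdeal R :=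
  Ideal.Quotient.mk (veroneseIdeal R) (X j)

/-- The coordinate functions in the diagonal positions `(i, i)`, which restrict to the squares
`tᵢ ^ 2` along the Veronese parametrization. -/
noncomputable def veroneseDiag (i : Fin 3) : MvPolynomial (Fin 6) R ⧸ veroneseIdeal R :=
  veroneseCoord R (i.castLE (by decide))

theorem adjoin_range_veroneseCoord : Algebra.adjoin R (Set.range (veroneseCoord R)) = ⊤ := by
  have hrange : Set.range (veroneseCoord R) =
      Ideal.Quotient.mkₐ R (veroneseIdeal R) '' Set.range X :=
    Set.range_comp (Ideal.Quotient.mkₐ R (veroneseIdeal R)) X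
  rw [hrange, ← AlgHom.map_adjoin, adjoin_range_X, Algebra.map_top, AlgHom.range_eq_top]
  exact Ideal.Quotient.mkₐ_surjective R _

theorem veroneseCoord_sq (j : Fin 6) :
    veroneseCoord R j ^ 2 =
      veroneseDiag R (veroneseIndex j).1 * veroneseDiag R (veroneseIndex j).2 := by
  have hrel {a b c : Fin 6} (h : X a * X b - X c ^ 2 ∈ veroneseIdeal R) :
      veroneseCoord R c ^ 2 = veroneseCoord R a * veroneseCoord R b :=
    ((Ideal.Quotient.mk_eq_mk_iff_sub_mem _ _).mpr h).symm
  fin_cases j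
  · exact sq _
  · exact sq _
  · exact sq _
  · exact hrel (a := 0) (b := 1) (Ideal.subset_span (by simp))
  · exact hrel (a := 0) (b := 2) (Ideal.subset_span (by simp))
  · exact hrel (a := 1) (b := 2) (Ideal.subset_span (by simp))

theorem algebraicIndependent_veroneseDiag : AlgebraicIndependent R (veroneseDiag R) := by
  let φ := Ideal.Quotient.liftₐ (veroneseIdeal R) (veroneseMap R)
    (veroneseIdeal_le_ker_veroneseMap R)
  have hφ : φ ∘ veroneseDiag R = fun i ↦ X i ^ 2 := by
    funext i
    change veroneseMap R (X (i.castLE _)) = X i ^ 2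
    fin_cases i <;> simp [veroneseMap, veroneseIndex, sq]
  exact .of_comp φ (hφ ▸ algebraicIndependent_X_pow (Fin 3) R two_pos)

instance isIntegral_adjoin_veroneseDiag :
    Algebra.IsIntegral (Algebra.adjoin R (Set.range (veroneseDiag R)))
      (MvPolynomial (Fin 6) R ⧸ veroneseIdeal R) := by
  refine isIntegral_of_adjoin_eq_top (adjoin_range_veroneseCoord R) ?_
  rintro _ ⟨j, rfl⟩
  have hdiag (i : Fin 3) :
      IsIntegral (Algebra.adjoin R (Set.range (veroneseDiag R))) (veroneseDiag R i) :=
    isIntegral_algebraMap (R := Algebra.adjoin R (Set.range (veroneseDiag R)))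
      (x := ⟨veroneseDiag R i, Algebra.subset_adjoin (Set.mem_range_self i)⟩)
  refine .of_pow two_pos ?_
  rw [veroneseCoord_sq]
  exact (hdiag _).mul (hdiag _)

theorem krullDim_veronese_cone_P2_general [IsNoetherianRing R] :
    ringKrullDim (MvPolynomial (Fin 6) R ⧸ veroneseIdeal R) = ringKrullDim R + 3 := by
  simpa using ringKrullDim_eq_add_of_algebraicIndependent (algebraicIndependent_veroneseDiag R)

end Veronese

/-- the quotient of `ℂ[z₁,…,z₆]` (with `zᵢ = X (i-1)`) by the ideal
generated by the six listed quadrics has Krull dimension 3. -/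
theorem krullDim_veronese_cone_P2 :
    ringKrullDim (MvPolynomial (Fin 6) ℂ ⧸
      Ideal.span ({X 0 * X 1 - X 3 ^ 2, X 0 * X 2 - X 4 ^ 2, X 1 * X 2 - X 5 ^ 2,
        X 0 * X 5 - X 3 * X 4, X 1 * X 4 - X 3 * X 5, X 2 * X 3 - X 4 * X 5} :
        Set (MvPolynomial (Fin 6) ℂ))) = 3 := by
  exact (krullDim_veronese_cone_P2_general ℂ).trans (by simp)
end

section
/- Let M be a commutative monoid, let x1, x2, x3, x4, x5, x6, y ∈ M, and let m1,...,m6, n, k be natural numbers with m1+m2+m3+m4+m5+m6+2n = 2k. Then the element x1^{m1}·x2^{m2}·x3^{m3}·x4^{m4}·x5^{m5}·x6^{m6}·y^{n} can be written as a product of exactly k elements of M, each of which is either of the form x_i·x_j for some (not necessarily distinct) indices i, j in {1,...,6}, or equal to y. -/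
/-!
Work with pointwise powers of subsets of `M`: an element lies in `A ^ k` exactly when it is a
product of `k` elements of `A`. Let `S` be the set of the `x i`. Grouping the `x i` into pairs, or
into blocks of any size `d`, is the identity `S ^ (d * j) = (S ^ d) ^ j`, and enlarging both `S ^ d`
and `{y}` to `S ^ d ∪ {y}` places the whole monomial in `(S ^ d ∪ {y}) ^ k`.
-/

open scoped Pointwise

theorem mem_set_pow_iff_exists_list {M : Type*} [Monoid M] {A : Set M} {k : ℕ} {a : M} :
    a ∈ A ^ k ↔ ∃ L : List M, L.length = k ∧ (∀ z ∈ L, z ∈ A) ∧ L.prod = a := by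
  rw [Set.mem_pow]
  constructor
  · rintro ⟨f, rfl⟩
    exact ⟨List.ofFn fun i => (f i : M), List.length_ofFn, by simp, rfl⟩
  · rintro ⟨L, rfl, hL, rfl⟩
    exact ⟨fun i => ⟨L.get i, hL _ (L.get_mem i)⟩, by rw [List.ofFn_get]⟩

theorem set_pow_mul_set_pow_subset_union_pow {M : Type*} [Monoid M] (A B : Set M) (m n : ℕ) :
    A ^ m * B ^ n ⊆ (A ∪ B) ^ (m + n) := by
  rw [pow_add]
  exact Set.mul_subset_mul (Set.pow_subset_pow_left Set.subset_union_left)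
    (Set.pow_subset_pow_left Set.subset_union_right)

theorem prod_pow_mem_set_pow_sum {ι M : Type*} [CommMonoid M] {A : Set M} (s : Finset ι)
    (x : ι → M) (m : ι → ℕ) (hx : ∀ i ∈ s, x i ∈ A) :
    ∏ i ∈ s, x i ^ m i ∈ A ^ ∑ i ∈ s, m i := by
  rw [← Finset.prod_pow_eq_pow_sum]
  exact Set.finsetProd_mem_finsetProd s _ _ fun i hi => Set.pow_mem_pow (hx i hi)

theorem prod_pow_eq_prod_of_pairs_and_y_general {ι M : Type*} [Fintype ι] [CommMonoid M]
    (x : ι → M) (y : M) (m : ι → ℕ) {d : ℕ} (hd : d ≠ 0) (n k : ℕ)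
    (h : (∑ i, m i) + d * n = d * k) :
    ∃ L : List M, L.length = k ∧
      (∀ z ∈ L, z ∈ Set.range x ^ d ∨ z = y) ∧
      L.prod = (∏ i, x i ^ m i) * y ^ n := by
  have hnk : n ≤ k :=
    Nat.le_of_mul_le_mul_left (h ▸ Nat.le_add_left _ _) (Nat.pos_of_ne_zero hd)
  obtain ⟨j, rfl⟩ := Nat.exists_eq_add_of_le' hnk
  have hsum : ∑ i, m i = d * j := Nat.add_right_cancel (h.trans (mul_add d j n))
  have hx : ∏ i, x i ^ m i ∈ (Set.range x ^ d) ^ j := by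
    rw [← pow_mul, ← hsum]
    exact prod_pow_mem_set_pow_sum _ x m fun i _ => Set.mem_range_self i
  have hy : y ^ n ∈ ({y} : Set M) ^ n := Set.pow_mem_pow (Set.mem_singleton y)
  exact mem_set_pow_iff_exists_list.mp
    (set_pow_mul_set_pow_subset_union_pow _ _ j n (Set.mul_mem_mul hx hy))

/-- in a commutative monoid, if `m₁ + ⋯ + m₆ + 2n = 2k`, then
`x₁^{m₁} ⋯ x₆^{m₆} · yⁿ` is a product of exactly `k` factors, each of which is a
product `xᵢ · xⱼ` of two of the `x`'s (indices possibly equal) or the element `y`. -/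
theorem prod_pow_eq_prod_of_pairs_and_y (M : Type*) [CommMonoid M]
    (x : Fin 6 → M) (y : M) (m : Fin 6 → ℕ) (n k : ℕ)
    (h : (∑ i, m i) + 2 * n = 2 * k) :
    ∃ L : List M, L.length = k ∧
      (∀ z ∈ L, (∃ i j : Fin 6, z = x i * x j) ∨ z = y) ∧
      L.prod = (∏ i, x i ^ m i) * y ^ n := by
  simpa [pow_two, Set.mem_mul, eq_comm] using
    prod_pow_eq_prod_of_pairs_and_y_general x y m two_ne_zero n k h
end
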